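/- In the nonlinear setting with standing conditions (N1)–(N5), the sequence of normalized Hausdorff measures m_n converges in the weak-* topology to Lebesgue measure on the interval [0,1]. -/

import Mathlib

open Set Filter MeasureTheory Topology

noncomputable section

/-- Composition `g_{i₁} ∘ g_{i₂} ∘ ⋯ ∘ g_{i_l}` along a finite word. -/
def wordComp (g : ℕ → ℝ → ℝ) : List ℕ → ℝ → ℝ
  | [] => id
  | k :: w => g k ∘ wordComp g w

/-- The limit set `J_n` of the IFS `S_n = {g_1, …, g_n}`. -/
def limitSet (g : ℕ → ℝ → ℝ) (n : ℕ) : Set ℝ :=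
  ⋂ l : ℕ, ⋃ w ∈ {w : List ℕ | w.length = l + 1 ∧ ∀ i ∈ w, 1 ≤ i ∧ i ≤ n},
    wordComp g w '' Set.Icc (0 : ℝ) 1

/-- The distortion `κ(g) = sup_{x,y ∈ [0,1]} |g′(y)|/|g′(x)|` of a map with derivative `f'`. -/
def distortion (f' : ℝ → ℝ) : ℝ :=
  ⨆ x ∈ Set.Icc (0 : ℝ) 1, ⨆ y ∈ Set.Icc (0 : ℝ) 1, |f' y| / |f' x|

/-- The nonlinear setting of the paper: a strictly decreasing sequence `b_k → 0` with `b_0 = 1`,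
    decreasing `C²` diffeomorphisms `g_k : [0,1] → [b_k, b_{k-1}]` (with first and second
    derivatives `g'` and `g''`), the Hausdorff dimensions `h_n` of the limit sets `J_n`, and
    the standing conditions (N1)–(N5). -/
structure NonlinearIFS where
  b : ℕ → ℝ
  g : ℕ → ℝ → ℝ
  g' : ℕ → ℝ → ℝ
  g'' : ℕ → ℝ → ℝ
  h : ℕ → ℝ
  b_zero : b 0 = 1
  b_anti : StrictAnti b
  b_lim : Filter.Tendsto b Filter.atTop (nhds 0)
  g_image : ∀ k, 1 ≤ k → g k '' Set.Icc (0 : ℝ) 1 = Set.Icc (b k) (b (k - 1))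
  g_anti : ∀ k, 1 ≤ k → StrictAntiOn (g k) (Set.Icc (0 : ℝ) 1)
  g_zero : ∀ k, 1 ≤ k → g k 0 = b (k - 1)
  g_one : ∀ k, 1 ≤ k → g k 1 = b k
  deriv1 : ∀ k, 1 ≤ k → ∀ x ∈ Set.Icc (0 : ℝ) 1, HasDerivAt (g k) (g' k x) x
  deriv2 : ∀ k, 1 ≤ k → ∀ x ∈ Set.Icc (0 : ℝ) 1, HasDerivAt (g' k) (g'' k x) x
  deriv_ne : ∀ k, 1 ≤ k → ∀ x ∈ Set.Icc (0 : ℝ) 1, g' k x ≠ 0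
  h_dim : ∀ n, 1 ≤ n → dimH (limitSet g n) = ENNReal.ofReal (h n)
  N1 : Filter.Tendsto (fun n : ℕ => (1 - h n) * Real.log n) Filter.atTop (nhds 0)
  N2 : Filter.Tendsto (fun n : ℕ => ⨆ k ∈ Set.Ici n, b k / b (k + 1)) Filter.atTop (nhds 1)
  N3 : ∃ c : ℝ, 0 < c ∧ ∀ n, 1 ≤ n → ∀ x ∈ Set.Icc (0 : ℝ) 1, |g'' n x / g' n x| < c
  N4 : Filter.Tendsto (fun n : ℕ => distortion (g' n)) Filter.atTop (nhds 1)
  N5 : ∃ α : ℝ, α < 1 ∧ ∀ n, 1 ≤ n → ∀ x ∈ Set.Icc (0 : ℝ) 1, |g' n x| < α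

/-- The normalized Hausdorff measure `m_n(A) = H_{h_n}(A ∩ J_n)/H_{h_n}(J_n)`. -/
def normMeas (S : NonlinearIFS) (n : ℕ) (A : Set ℝ) : ENNReal :=
  μH[S.h n] (A ∩ limitSet S.g n) / μH[S.h n] (limitSet S.g n)

/-- The normalized Hausdorff measure `m_n` as a Borel measure on `ℝ`. -/
def normMeasure (S : NonlinearIFS) (n : ℕ) : Measure ℝ :=
  (μH[S.h n] (limitSet S.g n))⁻¹ • (μH[S.h n]).restrict (limitSet S.g n)

open scoped ENNReal NNReal

/-!
Since `h n ≤ 1` and the branches contract, `|g' k| ≤ |g' k| ^ h n`, so `m n` is subinvariant under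
every truncated Lebesgue transfer operator `f ↦ ∑ k ≤ N, f ∘ g k * |g' k|` with `N ≤ n`; Lebesgue
measure is invariant in the limit `N → ∞`. Suppose that, asymptotically, `∫ f ∂m n ≥ t * ∫ f` for
all positive Lipschitz `f`. A function with `a`-Lipschitz logarithm exceeds `exp (-a)` times its
mean, so splitting off this constant improves the factor to `t + (1 - t) * exp (-a)`. The transfer
operators bring every such function to a logarithm with Lipschitz constant at most
`c / (1 - α) + 1`, hence the improvement is uniform in `f`, and iterating it gives `t = 1`. Applied
to a Lipschitz function and to its negative this yields convergence, and density extends it to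
continuous functions.

That `m n` is a probability measure at all, i.e. that the Hausdorff measure of the limit set in its
own dimension is positive and finite, follows from bounded distortion: the limit set is similar to
its pieces up to a uniform constant.
-/

/-! ### Hausdorff measure under expanding and contracting maps -/

section HausdorffMeasure

variable {X Y ι : Type*} [EMetricSpace X] [EMetricSpace Y] {t : ℝ}

lemma exists_isOpen_superset_ediam_lt_rpow_le {T : Set X} (hT : Metric.ediam T ≠ ⊤) (t : ℝ)
    (ht : 0 ≤ t) {δ : ℝ≥0∞} (hδ : δ ≠ 0) :
    ∃ (U : Set X) (d : ℝ≥0), IsOpen U ∧ T ⊆ U ∧ Metric.ediam U < d ∧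
      (d : ℝ≥0∞) ^ t ≤ Metric.ediam T ^ t + δ := by
  have hlt : Metric.ediam T ^ t < Metric.ediam T ^ t + δ :=
    ENNReal.lt_add_right (ENNReal.rpow_ne_top_of_nonneg ht hT) hδ
  have hnear : ∀ᶠ x in 𝓝 (Metric.ediam T), x ^ t < Metric.ediam T ^ t + δ :=
    ENNReal.continuous_rpow_const.continuousAt.eventually_lt_const hlt
  obtain ⟨u, hu, hnear⟩ := exists_Ico_subset_of_mem_nhds hnear ⟨⊤, hT.lt_top⟩
  obtain ⟨d, hd, hdu⟩ := ENNReal.lt_iff_exists_nnreal_btwn.1 hu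
  obtain ⟨r, hr, hrd⟩ := ENNReal.lt_iff_exists_add_pos_lt.1 hd
  refine ⟨Metric.thickening (r / 2 : ℝ≥0) T, d, Metric.isOpen_thickening,
    Metric.self_subset_thickening (by positivity) T, ?_, (hnear ⟨hd.le, hdu⟩).le⟩
  refine (Metric.ediam_thickening_le _).trans_lt (lt_of_eq_of_lt ?_ hrd)
  rw [← ENNReal.coe_ofNat, ← ENNReal.coe_mul, mul_div_cancel₀ r two_ne_zero]

lemma exists_pos_forall_le_edist_of_pairwise_disjoint [Finite ι] {A : ι → Set X}
    (hA : ∀ i, IsCompact (A i)) (hdisj : Pairwise (Function.onFun Disjoint A)) :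
    ∃ δ : ℝ≥0, 0 < δ ∧ ∀ i j, i ≠ j → ∀ x ∈ A i, ∀ y ∈ A j, δ ≤ edist x y := by
  have hpair (p : ι × ι) : ∃ δ : ℝ≥0, 0 < δ ∧
      (p.1 ≠ p.2 → ∀ x ∈ A p.1, ∀ y ∈ A p.2, δ ≤ edist x y) := by
    rcases eq_or_ne p.1 p.2 with hp | hp
    · exact ⟨1, one_pos, fun h => absurd hp h⟩
    · obtain ⟨r, hr, hlt⟩ :=
        Metric.exists_pos_forall_lt_edist (hA p.1) (hA p.2).isClosed (hdisj hp)
      exact ⟨r, hr, fun _ x hx y hy => (hlt x hx y hy).le⟩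
  choose δ hδ hle using hpair
  rcases isEmpty_or_nonempty ι with hι | hι
  · exact ⟨1, one_pos, fun i => isEmptyElim i⟩
  · obtain ⟨p, hp⟩ := Finite.exists_min δ
    exact ⟨δ p, hδ p, fun i j hij x hx y hy =>
      (ENNReal.coe_le_coe.2 (hp (i, j))).trans (hle (i, j) hij x hx y hy)⟩

lemma rpow_mul_sum_ediam_preimage_rpow_le {φ : X → Y} {r : ℝ≥0} (ht : 0 ≤ t)
    (hφ : AntilipschitzWith r⁻¹ φ) {β : Type*} (F : Finset β) (U : β → Set Y) :
    (r : ℝ≥0∞) ^ t * ∑ i ∈ F, Metric.ediam (φ ⁻¹' U i) ^ t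
      ≤ ∑ i ∈ F, Metric.ediam (U i) ^ t := by
  rw [Finset.mul_sum]
  refine Finset.sum_le_sum fun i _ => ?_
  rw [← ENNReal.mul_rpow_of_nonneg _ _ ht]
  refine ENNReal.rpow_le_rpow ?_ ht
  calc (r : ℝ≥0∞) * Metric.ediam (φ ⁻¹' U i)
      ≤ r * ((r⁻¹ : ℝ≥0) * Metric.ediam (U i)) := by
        gcongr
        exact hφ.ediam_preimage_le _
    _ = (r * r⁻¹ : ℝ≥0) * Metric.ediam (U i) := by rw [ENNReal.coe_mul, mul_assoc]
    _ ≤ Metric.ediam (U i) := mul_le_of_le_one_left' (by exact_mod_cast mul_inv_le_one)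

-- Induction on the cover: either some piece is longer than the gap `δ` between the ranges, or
-- no piece meets two of them, and the cover splits into smaller covers of the ranges.
lemma rpow_le_sum_ediam_rpow_of_antilipschitzWith [Nonempty X] [Fintype ι] [Nontrivial ι]
    {φ : ι → X → X} {r : ι → ℝ≥0} {δ : ℝ≥0∞} (ht : 0 ≤ t)
    (hφ : ∀ k, AntilipschitzWith (r k)⁻¹ (φ k))
    (hδ : ∀ k l, k ≠ l → ∀ x y, δ ≤ edist (φ k x) (φ l y))
    (hsum : 1 ≤ ∑ k, (r k : ℝ≥0∞) ^ t) {β : Type*} (F : Finset β) (U : β → Set X)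
    (hcover : ⋃ i ∈ F, U i = univ) : δ ^ t ≤ ∑ i ∈ F, Metric.ediam (U i) ^ t := by
  classical
  induction F using Finset.strongInduction generalizing U with | H F ih =>
  by_cases hbig : ∃ i ∈ F, δ ≤ Metric.ediam (U i)
  · obtain ⟨i, hi, hδi⟩ := hbig
    exact (ENNReal.rpow_le_rpow hδi ht).trans
      (Finset.single_le_sum (f := fun i => Metric.ediam (U i) ^ t) (fun _ _ => zero_le) hi)
  push Not at hbig
  let G (k : ι) : Finset β := F.filter fun i => (φ k ⁻¹' U i).Nonempty
  have hGcover (k) (x : X) : ∃ i ∈ G k, φ k x ∈ U i := by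
    have hx : φ k x ∈ ⋃ i ∈ F, U i := hcover ▸ mem_univ _
    obtain ⟨i, hi, hxi⟩ := mem_iUnion₂.1 hx
    exact ⟨i, Finset.mem_filter.2 ⟨hi, x, hxi⟩, hxi⟩
  have hGdisj (k l) (hkl : k ≠ l) : Disjoint (G k) (G l) := by
    refine Finset.disjoint_left.2 fun i hik hil => ?_
    obtain ⟨hi, x, hx⟩ := Finset.mem_filter.1 hik
    obtain ⟨-, y, hy⟩ := Finset.mem_filter.1 hil
    exact (hbig i hi).not_ge ((hδ k l hkl x y).trans (Metric.edist_le_ediam_of_mem hx hy))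
  have hGF (k) : G k ⊂ F := by
    obtain ⟨l, hl⟩ := exists_ne k
    obtain ⟨i, hi, -⟩ := hGcover l (Classical.arbitrary X)
    exact (Finset.ssubset_iff_of_subset (Finset.filter_subset _ _)).2
      ⟨i, Finset.mem_of_mem_filter i hi, Finset.disjoint_left.1 (hGdisj l k hl) hi⟩
  have hpiece (k) : (r k : ℝ≥0∞) ^ t * δ ^ t ≤ ∑ i ∈ G k, Metric.ediam (U i) ^ t := by
    have hcover_k : ⋃ i ∈ G k, φ k ⁻¹' U i = univ :=
      eq_univ_of_forall fun x => mem_iUnion₂.2 (by simpa using hGcover k x)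
    refine le_trans ?_ (rpow_mul_sum_ediam_preimage_rpow_le ht (hφ k) (G k) U)
    gcongr
    exact ih (G k) (hGF k) _ hcover_k
  calc δ ^ t ≤ (∑ k, (r k : ℝ≥0∞) ^ t) * δ ^ t := le_mul_of_one_le_left' hsum
    _ ≤ ∑ k, ∑ i ∈ G k, Metric.ediam (U i) ^ t := by
        rw [Finset.sum_mul]
        exact Finset.sum_le_sum fun k _ => hpiece k
    _ = ∑ i ∈ Finset.univ.biUnion G, Metric.ediam (U i) ^ t :=
        (Finset.sum_biUnion fun k _ l _ hkl => hGdisj k l hkl).symm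
    _ ≤ ∑ i ∈ F, Metric.ediam (U i) ^ t := Finset.sum_le_sum_of_subset
        (Finset.biUnion_subset.2 fun k _ => (hGF k).subset)

variable [MeasurableSpace Y] [BorelSpace Y]

lemma hausdorffMeasure_univ_le_of_lipschitzWith {κ : ℕ → Type*} [∀ m, Fintype (κ m)]
    {φ : ∀ m, κ m → X → Y} {L : ∀ m, κ m → ℝ≥0} {ε : ℕ → ℝ≥0} {B : ℝ≥0∞} (ht : 0 ≤ t)
    (hX : Metric.ediam (univ : Set X) ≠ ⊤) (hφ : ∀ m i, LipschitzWith (L m i) (φ m i))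
    (hcover : ∀ m, ⋃ i, range (φ m i) = univ) (hLε : ∀ m i, L m i ≤ ε m)
    (hε : Tendsto ε atTop (𝓝 0)) (hB : ∀ m, ∑ i, (L m i : ℝ≥0∞) ^ t ≤ B) :
    μH[t] (univ : Set Y) ≤ B * Metric.ediam (univ : Set X) ^ t := by
  have hdiam (m i) : Metric.ediam (range (φ m i)) ≤ L m i * Metric.ediam (univ : Set X) := by
    rw [← image_univ]
    exact (hφ m i).ediam_image_le univ
  have hlim : Tendsto (fun m => (ε m : ℝ≥0∞) * Metric.ediam (univ : Set X)) atTop (𝓝 0) := by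
    simpa using ENNReal.Tendsto.mul_const (ENNReal.tendsto_coe.2 hε) (.inr hX)
  refine (Measure.hausdorffMeasure_le_liminf_sum t univ _ hlim (fun m i => range (φ m i))
    (.of_forall fun m i => (hdiam m i).trans ?_) (.of_forall fun m => (hcover m).ge)).trans ?_
  · gcongr
    exact hLε m i
  calc liminf (fun m => ∑ i, Metric.ediam (range (φ m i)) ^ t) atTop
      ≤ liminf (fun _ : ℕ => B * Metric.ediam (univ : Set X) ^ t) atTop := by
        refine liminf_le_liminf (.of_forall fun m => ?_)
        calc ∑ i, Metric.ediam (range (φ m i)) ^ t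
            ≤ ∑ i, (L m i : ℝ≥0∞) ^ t * Metric.ediam (univ : Set X) ^ t := by
              gcongr with i
              rw [← ENNReal.mul_rpow_of_nonneg _ _ ht]
              exact ENNReal.rpow_le_rpow (hdiam m i) ht
          _ ≤ B * Metric.ediam (univ : Set X) ^ t := by
              rw [← Finset.sum_mul]
              gcongr
              exact hB m
    _ = B * Metric.ediam (univ : Set X) ^ t := liminf_const _

lemma exists_cover_tsum_ediam_rpow_lt {s : Set Y} (ht : 0 < t) (hs : μH[t] s = 0) {ε : ℝ≥0∞}
    (hε : ε ≠ 0) : ∃ T : ℕ → Set Y, s ⊆ ⋃ n, T n ∧ (∀ n, Metric.ediam (T n) ≤ 1) ∧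
      ∑' n, Metric.ediam (T n) ^ t < ε := by
  rw [Measure.hausdorffMeasure_apply, ENNReal.iSup_eq_zero] at hs
  have hinf := ENNReal.iSup_eq_zero.1 (hs 1) one_pos
  obtain ⟨T, hT⟩ := iInf_lt_iff.1 (hinf.trans_lt hε.bot_lt)
  simp only [iInf_lt_iff] at hT
  obtain ⟨hcover, hdiam, hsum⟩ := hT
  refine ⟨T, hcover, hdiam, (ENNReal.tsum_le_tsum fun n => ?_).trans_lt hsum⟩
  rcases (T n).eq_empty_or_nonempty with hn | hn
  · simp [hn, ENNReal.zero_rpow_of_pos ht]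
  · exact (iSup_pos (f := fun _ : (T n).Nonempty => Metric.ediam (T n) ^ t) hn).ge

lemma exists_finite_cover_sum_rpow_lt {s : Set Y} (hs : IsCompact s) (ht : 0 < t)
    (h0 : μH[t] s = 0) {ε : ℝ≥0∞} (hε : ε ≠ 0) :
    ∃ (F : Finset ℕ) (U : ℕ → Set Y) (d : ℕ → ℝ≥0), s ⊆ ⋃ i ∈ F, U i ∧
      (∀ i, Metric.ediam (U i) < d i) ∧ ∑ i ∈ F, (d i : ℝ≥0∞) ^ t < ε := by
  have hε2 : ε / 2 ≠ 0 := (ENNReal.half_pos hε).ne'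
  obtain ⟨T, hcover, hdiam, hsum⟩ := exists_cover_tsum_ediam_rpow_lt ht h0 hε2
  obtain ⟨δ, hδ, hδsum⟩ := ENNReal.exists_pos_sum_of_countable' hε2 ℕ
  choose U d hU hTU hUd hd using fun n => exists_isOpen_superset_ediam_lt_rpow_le
    ((hdiam n).trans_lt ENNReal.one_lt_top).ne t ht.le (hδ n).ne'
  obtain ⟨F, hF⟩ := hs.elim_finite_subcover U hU (hcover.trans (iUnion_mono hTU))
  refine ⟨F, U, d, hF, hUd, ?_⟩
  calc ∑ i ∈ F, (d i : ℝ≥0∞) ^ t ≤ ∑' i, (Metric.ediam (T i) ^ t + δ i) :=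
        (Finset.sum_le_sum fun i _ => hd i).trans (ENNReal.sum_le_tsum F)
    _ = ∑' i, Metric.ediam (T i) ^ t + ∑' i, δ i := ENNReal.tsum_add
    _ < ε / 2 + ε / 2 := ENNReal.add_lt_add hsum hδsum
    _ = ε := ENNReal.add_halves ε

lemma hausdorffMeasure_univ_ne_zero_of_antilipschitzWith [CompactSpace Y] [Nonempty Y]
    [Fintype ι] [Nontrivial ι] {φ : ι → Y → Y} {r : ι → ℝ≥0} (ht : 0 < t)
    (hcont : ∀ k, Continuous (φ k)) (hφ : ∀ k, AntilipschitzWith (r k)⁻¹ (φ k))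
    (hdisj : Pairwise (Function.onFun Disjoint fun k => range (φ k)))
    (hsum : 1 ≤ ∑ k, (r k : ℝ≥0∞) ^ t) : μH[t] (univ : Set Y) ≠ 0 := by
  intro h0
  obtain ⟨δ, hδ, hgap⟩ := exists_pos_forall_le_edist_of_pairwise_disjoint
    (fun k => isCompact_range (hcont k)) hdisj
  obtain ⟨F, U, d, hcover, hUd, hlt⟩ := exists_finite_cover_sum_rpow_lt isCompact_univ ht h0
    (ε := δ ^ t) (ENNReal.rpow_pos (by exact_mod_cast hδ) ENNReal.coe_ne_top).ne'
  have hle := rpow_le_sum_ediam_rpow_of_antilipschitzWith ht.le hφ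
    (fun k l hkl x y => hgap k l hkl _ ⟨x, rfl⟩ _ ⟨y, rfl⟩) hsum F U (univ_subset_iff.1 hcover)
  refine hle.not_gt (lt_of_le_of_lt (Finset.sum_le_sum fun i _ => ?_) hlt)
  exact ENNReal.rpow_le_rpow (hUd i).le ht.le

end HausdorffMeasure

/-! ### Quasi-self-similar systems -/

lemma continuous_sum_coe_rpow {ι : Type*} [Fintype ι] {r : ι → ℝ≥0} (hr : ∀ i, 0 < r i) :
    Continuous fun t : ℝ≥0 => ∑ i, (r i : ℝ≥0∞) ^ (t : ℝ) := by
  refine continuous_finsetSum _ fun i _ => ?_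
  simp only [← ENNReal.coe_rpow_of_ne_zero (hr i).ne']
  exact ENNReal.continuous_coe.comp <| continuous_iff_continuousAt.2 fun t =>
    continuousAt_const.nnrpow NNReal.continuous_coe.continuousAt (.inl (hr i).ne')

section Words

variable {X ι : Type*}

/-- The composite `g i₁ ∘ ⋯ ∘ g iₘ` of an iterated function system along a finite word. -/
def wordMap (g : ι → X → X) : List ι → X → X
  | [] => id
  | i :: w => g i ∘ wordMap g w

lemma wordMap_append (g : ι → X → X) (v w : List ι) :
    wordMap g (v ++ w) = wordMap g v ∘ wordMap g w := by
  induction v with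
  | nil => rfl
  | cons i v ih => simp only [List.cons_append, wordMap, ih, Function.comp_assoc]

lemma wordMap_ofFn_succ (g : ι → X → X) {m : ℕ} (w : Fin (m + 1) → ι) :
    wordMap g (List.ofFn w) = g (w 0) ∘ wordMap g (List.ofFn fun i => w i.succ) := by
  rw [List.ofFn_succ, wordMap]

lemma wordMap_lipschitzWith [PseudoEMetricSpace X] {g : ι → X → X} {L : ι → ℝ≥0}
    (hg : ∀ i, LipschitzWith (L i) (g i)) (w : List ι) :
    LipschitzWith (w.map L).prod (wordMap g w) := by
  induction w with
  | nil => exact LipschitzWith.id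
  | cons i w ih => simpa only [List.map_cons, List.prod_cons, wordMap] using (hg i).comp ih

lemma iUnion_range_wordMap {g : ι → X → X} (hg : ⋃ i, range (g i) = univ) (m : ℕ) :
    ⋃ w : Fin m → ι, range (wordMap g (List.ofFn w)) = univ := by
  induction m with
  | zero => simp [wordMap, iUnion_const]
  | succ m ih =>
    refine eq_univ_of_forall fun x => ?_
    obtain ⟨i, y, rfl⟩ := mem_iUnion.1 (hg ▸ mem_univ x)
    obtain ⟨w, z, rfl⟩ := mem_iUnion.1 (ih ▸ mem_univ y)
    exact mem_iUnion.2 ⟨Fin.cons i w, z, congrFun (wordMap_ofFn_succ g _) z⟩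

lemma pairwise_disjoint_range_wordMap {g : ι → X → X} (hinj : ∀ i, Function.Injective (g i))
    (hdisj : Pairwise (Function.onFun Disjoint fun i => range (g i))) (m : ℕ) :
    Pairwise (Function.onFun Disjoint fun w : Fin m → ι => range (wordMap g (List.ofFn w))) := by
  induction m with
  | zero => exact fun v w hvw => absurd (Subsingleton.elim v w) hvw
  | succ m ih =>
    intro v w hvw
    simp only [Function.onFun, wordMap_ofFn_succ, range_comp]
    rcases eq_or_ne (v 0) (w 0) with h0 | h0
    · rw [h0, disjoint_image_iff (hinj _)]
      refine ih fun htail => hvw (funext (Fin.cases h0 fun i => congrFun htail i))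
    · exact (hdisj h0).mono (image_subset_range _ _) (image_subset_range _ _)

end Words

section Dimension

variable {X ι : Type*} [MetricSpace X] [CompactSpace X] [Fintype ι] {φ : ι → X → X}

lemma lt_dimH_univ_of_antilipschitzWith [Nonempty X] [Nontrivial ι] {r : ι → ℝ≥0}
    (hr : ∀ i, 0 < r i) (hcont : ∀ i, Continuous (φ i))
    (hφ : ∀ i, AntilipschitzWith (r i)⁻¹ (φ i))
    (hdisj : Pairwise (Function.onFun Disjoint fun i => range (φ i))) {t : ℝ≥0}
    (hsum : 1 < ∑ i, (r i : ℝ≥0∞) ^ (t : ℝ)) : t < dimH (univ : Set X) := by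
  borelize X
  have hnear : ∀ᶠ s : ℝ≥0 in 𝓝[>] t, 1 < ∑ i, (r i : ℝ≥0∞) ^ (s : ℝ) :=
    nhdsWithin_le_nhds ((continuous_sum_coe_rpow hr).continuousAt.eventually_const_lt hsum)
  obtain ⟨s, hs, hts⟩ := (hnear.and self_mem_nhdsWithin).exists
  refine (ENNReal.coe_lt_coe.2 hts).trans_le (le_dimH_of_hausdorffMeasure_ne_zero ?_)
  exact hausdorffMeasure_univ_ne_zero_of_antilipschitzWith (NNReal.coe_pos.2 (pos_of_gt hts))
    hcont hφ hdisj hs.le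

lemma dimH_univ_le_of_lipschitzWith {R : ι → ℝ≥0} (hR : ∀ i, R i < 1)
    (hφ : ∀ i, LipschitzWith (R i) (φ i)) (hcover : ⋃ i, range (φ i) = univ) {t : ℝ≥0}
    (hsum : ∑ i, (R i : ℝ≥0∞) ^ (t : ℝ) ≤ 1) : dimH (univ : Set X) ≤ t := by
  borelize X
  have hle := hausdorffMeasure_univ_le_of_lipschitzWith (t := t) (B := 1)
    (φ := fun m (w : Fin m → ι) => wordMap φ (List.ofFn w)) (L := fun m w => ∏ i, R (w i))
    (ε := fun m => Finset.univ.sup R ^ m) t.coe_nonneg isCompact_univ.isBounded.ediam_ne_top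
    (fun m w => by simpa [List.prod_ofFn] using wordMap_lipschitzWith hφ (List.ofFn w))
    (iUnion_range_wordMap hcover) ?_ ?_ ?_
  · refine dimH_le_of_hausdorffMeasure_ne_top (ne_top_of_le_ne_top ?_ hle)
    rw [one_mul]
    exact ENNReal.rpow_ne_top_of_nonneg t.coe_nonneg isCompact_univ.isBounded.ediam_ne_top
  · intro m w
    simpa using Finset.prod_le_pow_card Finset.univ (fun i => R (w i)) _
      fun i _ => Finset.le_sup (Finset.mem_univ (w i))
  · exact tendsto_pow_atTop_nhds_zero_of_lt_one zero_le
      ((Finset.sup_lt_iff one_pos).2 fun i _ => hR i)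
  · intro m
    simp only [ENNReal.ofNNReal_finsetProd, ← ENNReal.prod_rpow_of_nonneg t.coe_nonneg]
    rw [← Fintype.sum_pow fun i => (R i : ℝ≥0∞) ^ (t : ℝ)]
    exact pow_le_one₀ zero_le hsum

lemma dimH_univ_lt_of_lipschitzWith {R : ι → ℝ≥0} (hR : ∀ i, 0 < R i)
    (hφ : ∀ i, LipschitzWith (R i) (φ i)) (hcover : ⋃ i, range (φ i) = univ) {t : ℝ≥0}
    (ht : 0 < t) (hsum : ∑ i, (R i : ℝ≥0∞) ^ (t : ℝ) < 1) : dimH (univ : Set X) < t := by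
  have hR1 (i) : R i < 1 := by
    by_contra! hi
    refine hsum.not_ge (le_trans ?_ (Finset.single_le_sum
      (f := fun i => (R i : ℝ≥0∞) ^ (t : ℝ)) (fun _ _ => zero_le) (Finset.mem_univ i)))
    exact ENNReal.one_le_rpow (by exact_mod_cast hi) (NNReal.coe_pos.2 ht)
  have hnear : ∀ᶠ s : ℝ≥0 in 𝓝[<] t, ∑ i, (R i : ℝ≥0∞) ^ (s : ℝ) < 1 :=
    nhdsWithin_le_nhds ((continuous_sum_coe_rpow hR).continuousAt.eventually_lt_const hsum)
  have := nhdsLT_neBot_of_exists_lt ⟨0, ht⟩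
  obtain ⟨s, hs, hst⟩ := (hnear.and self_mem_nhdsWithin).exists
  exact (dimH_univ_le_of_lipschitzWith hR1 hφ hcover hs.le).trans_lt (ENNReal.coe_lt_coe.2 hst)

end Dimension

/-- An iterated function system `g` on `X` with limit set all of `X` and pairwise disjoint first
level pieces, whose composites along a word `w` are similarities of ratio `ρ w` up to the constant
factor `K`, independent of the word, with `ρ w` decaying geometrically in the length of `w`. -/
structure IsQuasiSelfSimilar {X ι : Type*} [PseudoEMetricSpace X] (g : ι → X → X)
    (ρ : List ι → ℝ≥0) (K α : ℝ≥0) : Prop where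
  iUnion_range : ⋃ i, range (g i) = univ
  disjoint_range : Pairwise (Function.onFun Disjoint fun i => range (g i))
  const_pos : 0 < K
  rate_lt_one : α < 1
  ratio_pos : ∀ w, 0 < ρ w
  ratio_le : ∀ w, ρ w ≤ α ^ w.length
  lipschitzWith : ∀ w, LipschitzWith (K * ρ w) (wordMap g w)
  antilipschitzWith : ∀ w, AntilipschitzWith (K / ρ w) (wordMap g w)

namespace IsQuasiSelfSimilar

variable {X ι : Type*} [MetricSpace X] {g : ι → X → X}
  {ρ : List ι → ℝ≥0} {K α : ℝ≥0}

lemma pairwise_disjoint_range (hg : IsQuasiSelfSimilar g ρ K α) (m : ℕ) :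
    Pairwise (Function.onFun Disjoint fun w : Fin m → ι => range (wordMap g (List.ofFn w))) :=
  pairwise_disjoint_range_wordMap (fun i => (hg.antilipschitzWith [i]).injective)
    hg.disjoint_range m

lemma exists_subset_range_append {δ : ℝ≥0} [Nonempty ι] (hg : IsQuasiSelfSimilar g ρ K α)
    (hδ : ∀ i j, i ≠ j → ∀ x ∈ range (g i), ∀ y ∈ range (g j), δ ≤ edist x y) {U : Set X}
    {w : List ι} (hU : U ⊆ range (wordMap g w)) (hdiam : (K / ρ w : ℝ≥0) * Metric.ediam U < δ) :
    ∃ i, U ⊆ range (wordMap g (w ++ [i])) := by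
  set V := wordMap g w ⁻¹' U
  have hVdiam : Metric.ediam V < δ := ((hg.antilipschitzWith w).ediam_preimage_le U).trans_lt hdiam
  obtain ⟨i, hi⟩ : ∃ i, V ⊆ range (g i) := by
    rcases V.eq_empty_or_nonempty with hempty | ⟨x, hx⟩
    · exact ⟨Classical.arbitrary ι, by simp [hempty]⟩
    obtain ⟨i, hi⟩ := mem_iUnion.1 (hg.iUnion_range ▸ mem_univ x)
    refine ⟨i, fun y hy => ?_⟩
    obtain ⟨j, hj⟩ := mem_iUnion.1 (hg.iUnion_range ▸ mem_univ y)
    by_contra hyi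
    refine hVdiam.not_ge ((hδ i j ?_ x hi y hj).trans (Metric.edist_le_ediam_of_mem hx hy))
    rintro rfl
    exact hyi hj
  refine ⟨i, fun y hy => ?_⟩
  obtain ⟨x, rfl⟩ := hU hy
  obtain ⟨z, rfl⟩ := hi hy
  exact ⟨z, by rw [wordMap_append]; rfl⟩

variable [CompactSpace X]

lemma lt_dimH_univ [Fintype ι] [Nonempty X] [Nontrivial ι] (hg : IsQuasiSelfSimilar g ρ K α) {m : ℕ}
    {t : ℝ≥0} (hsum : 1 < ∑ w : Fin (m + 1) → ι, ((ρ (List.ofFn w) / K : ℝ≥0) : ℝ≥0∞) ^ (t : ℝ)) :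
    t < dimH (univ : Set X) := by
  refine lt_dimH_univ_of_antilipschitzWith (r := fun w => ρ (List.ofFn w) / K)
    (fun w => div_pos (hg.ratio_pos _) hg.const_pos)
    (fun w => (hg.lipschitzWith _).continuous) (fun w => ?_) (hg.pairwise_disjoint_range (m + 1))
    hsum
  rw [inv_div]
  exact hg.antilipschitzWith _

variable [Finite ι]

lemma dimH_univ_pos [Nonempty X] [Nontrivial ι] (hg : IsQuasiSelfSimilar g ρ K α) :
    0 < dimH (univ : Set X) := by
  cases nonempty_fintype ι
  have hcard : 1 < Fintype.card (Fin 1 → ι) := Fintype.one_lt_card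
  exact_mod_cast hg.lt_dimH_univ (m := 0) (t := 0) (by simpa using hcard)

lemma hausdorffMeasure_univ_ne_top [MeasurableSpace X] [BorelSpace X] [Nonempty X] [Nontrivial ι]
    (hg : IsQuasiSelfSimilar g ρ K α) {t : ℝ≥0} (ht : dimH (univ : Set X) ≤ t) :
    μH[t] (univ : Set X) ≠ ⊤ := by
  cases nonempty_fintype ι
  have hsum (m : ℕ) : ∑ w : Fin (m + 1) → ι, ((ρ (List.ofFn w) / K : ℝ≥0) : ℝ≥0∞) ^ (t : ℝ) ≤ 1 :=
    not_lt.1 fun h => ht.not_gt (hg.lt_dimH_univ h)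
  have hle := hausdorffMeasure_univ_le_of_lipschitzWith (B := (K * K : ℝ≥0) ^ (t : ℝ))
    (φ := fun m (w : Fin (m + 1) → ι) => wordMap g (List.ofFn w)) (ε := fun m => K * α ^ (m + 1))
    t.coe_nonneg isCompact_univ.isBounded.ediam_ne_top (fun m w => hg.lipschitzWith _)
    (fun m => iUnion_range_wordMap hg.iUnion_range (m + 1)) (fun m w => ?_) ?_ fun m => ?_
  · refine ne_top_of_le_ne_top (ENNReal.mul_ne_top ?_ ?_) hle
    · exact ENNReal.rpow_ne_top_of_nonneg t.coe_nonneg ENNReal.coe_ne_top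
    · exact ENNReal.rpow_ne_top_of_nonneg t.coe_nonneg isCompact_univ.isBounded.ediam_ne_top
  · gcongr
    simpa using hg.ratio_le (List.ofFn w)
  · simpa using ((tendsto_pow_atTop_nhds_zero_of_lt_one zero_le hg.rate_lt_one).comp
      (tendsto_add_atTop_nat 1)).const_mul K
  · calc ∑ w : Fin (m + 1) → ι, ((K * ρ (List.ofFn w) : ℝ≥0) : ℝ≥0∞) ^ (t : ℝ)
        = (K * K : ℝ≥0) ^ (t : ℝ) * ∑ w : Fin (m + 1) → ι,
            ((ρ (List.ofFn w) / K : ℝ≥0) : ℝ≥0∞) ^ (t : ℝ) := by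
          rw [Finset.mul_sum]
          refine Finset.sum_congr rfl fun w _ => ?_
          rw [← ENNReal.mul_rpow_of_nonneg _ _ t.coe_nonneg, ← ENNReal.coe_mul, mul_assoc,
            mul_div_cancel₀ _ hg.const_pos.ne']
      _ ≤ (K * K : ℝ≥0) ^ (t : ℝ) := mul_le_of_le_one_right' (hsum m)

lemma exists_subset_range_ratio_le [Nonempty ι] (hg : IsQuasiSelfSimilar g ρ K α) :
    ∃ C : ℝ≥0, 0 < C ∧ ∀ (U : Set X) (d : ℝ≥0), Metric.ediam U < d →
      ∃ w, U ⊆ range (wordMap g w) ∧ ρ w ≤ C * d := by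
  obtain ⟨δ, hδ, hgap⟩ := exists_pos_forall_le_edist_of_pairwise_disjoint
    (fun i => isCompact_range (hg.lipschitzWith [i]).continuous) hg.disjoint_range
  refine ⟨K / δ, div_pos hg.const_pos hδ, fun U d hd => ?_⟩
  by_contra! hlarge
  have hd0 : 0 < d := by exact_mod_cast pos_of_gt hd
  have hlong (m : ℕ) : ∃ w : List ι, w.length = m ∧ U ⊆ range (wordMap g w) := by
    induction m with
    | zero => exact ⟨[], rfl, by simp [wordMap]⟩
    | succ m ih =>
      obtain ⟨w, hw, hU⟩ := ih
      have hsmall : K / ρ w * d < δ := by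
        have := hlarge w hU
        rw [div_mul_eq_mul_div, div_lt_iff₀ hδ] at this
        rwa [div_mul_eq_mul_div, div_lt_iff₀ (hg.ratio_pos w), mul_comm δ]
      obtain ⟨i, hi⟩ := hg.exists_subset_range_append hgap hU
        (lt_of_le_of_lt (mul_le_mul_right hd.le _) (by exact_mod_cast hsmall))
      exact ⟨w ++ [i], by simp [hw], hi⟩
  obtain ⟨m, hm⟩ := exists_pow_lt_of_lt_one (mul_pos (div_pos hg.const_pos hδ) hd0) hg.rate_lt_one
  obtain ⟨w, rfl, hU⟩ := hlong m
  exact (hlarge w hU).not_ge ((hg.ratio_le w).trans hm.le)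

lemma hausdorffMeasure_univ_ne_zero [MeasurableSpace X] [BorelSpace X] [Nonempty ι]
    (hg : IsQuasiSelfSimilar g ρ K α) {t : ℝ≥0} (ht0 : 0 < t) (ht : t ≤ dimH (univ : Set X)) :
    μH[t] (univ : Set X) ≠ 0 := by
  intro h0
  obtain ⟨C, hC, hlocate⟩ := hg.exists_subset_range_ratio_le
  have hKC : 0 < K * C := mul_pos hg.const_pos hC
  obtain ⟨F, U, d, hcover, hUd, hsum⟩ := exists_finite_cover_sum_rpow_lt isCompact_univ
    (NNReal.coe_pos.2 ht0) h0 (ε := 1 / (K * C : ℝ≥0) ^ (t : ℝ))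
    (ENNReal.div_ne_zero.2 ⟨one_ne_zero, ENNReal.rpow_ne_top_of_nonneg t.coe_nonneg
      ENNReal.coe_ne_top⟩)
  choose w hUw hw using fun i => hlocate (U i) (d i) (hUd i)
  refine ht.not_gt (dimH_univ_lt_of_lipschitzWith (φ := fun i : F => wordMap g (w i))
    (R := fun i => K * C * d i)
    (fun i => mul_pos hKC (by exact_mod_cast pos_of_gt (hUd i)))
    (fun i => (hg.lipschitzWith _).weaken ?_) ?_ ht0 ?_)
  · rw [mul_assoc]
    gcongr
    exact hw i
  · refine eq_univ_of_univ_subset (hcover.trans (iUnion₂_subset fun i hi => ?_))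
    exact (hUw i).trans (subset_iUnion (fun i : F => range (wordMap g (w i))) ⟨i, hi⟩)
  · rw [Finset.sum_coe_sort F fun i => ((K * C * d i : ℝ≥0) : ℝ≥0∞) ^ (t : ℝ)]
    simp only [ENNReal.coe_mul _ (d _), ENNReal.mul_rpow_of_nonneg _ _ t.coe_nonneg]
    rw [← Finset.mul_sum]
    exact ENNReal.mul_lt_of_lt_div' hsum

end IsQuasiSelfSimilar

/-! ### Hausdorff measure and local expansion -/

section Conformality

lemma measure_le_of_locally_le {X : Type*} [TopologicalSpace X] [SecondCountableTopology X]
    [MeasurableSpace X] [OpensMeasurableSpace X] {μ ν : Measure X}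
    (h : ∀ x, ∃ u ∈ 𝓝 x, ∀ s, MeasurableSet s → s ⊆ u → μ s ≤ ν s) : μ ≤ ν := by
  choose u hu hle using h
  obtain ⟨c, hc, hcover⟩ :=
    TopologicalSpace.countable_cover_nhds fun x => interior_mem_nhds.2 (hu x)
  refine Measure.le_iff.2 fun s hs => ?_
  rcases c.eq_empty_or_nonempty with rfl | hne
  · have : IsEmpty X := univ_eq_empty_iff.1 (by simpa using hcover.symm)
    simp [s.eq_empty_of_isEmpty]
  obtain ⟨p, rfl⟩ := hc.exists_eq_range hne
  have hopen (n) : MeasurableSet (interior (u (p n))) := isOpen_interior.measurableSet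
  have hpiece (n) : MeasurableSet (s ∩ disjointed (fun n => interior (u (p n))) n) :=
    hs.inter (MeasurableSet.disjointed hopen n)
  have hsplit : s = ⋃ n, s ∩ disjointed (fun n => interior (u (p n))) n := by
    rw [← inter_iUnion, iUnion_disjointed, ← biUnion_range (g := fun x => interior (u x)), hcover,
      inter_univ]
  have hdisj : Pairwise (Function.onFun Disjoint
      fun n => s ∩ disjointed (fun n => interior (u (p n))) n) := fun i j hij =>
    (disjoint_disjointed _ hij).mono inter_subset_right inter_subset_right
  rw [hsplit, measure_iUnion hdisj hpiece, measure_iUnion hdisj hpiece]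
  exact ENNReal.tsum_le_tsum fun n => hle (p n) _ (hpiece n)
    (inter_subset_right.trans ((disjointed_subset _ n).trans interior_subset))

variable {X Y : Type*} [EMetricSpace X] [EMetricSpace Y] [MeasurableSpace X] [BorelSpace X]
  [MeasurableSpace Y] [BorelSpace Y] {h : ℝ} {e : X → Y}

lemma rpow_mul_hausdorffMeasure_le_image {r : ℝ≥0} (hr0 : 0 < r) (hh : 0 ≤ h) {s : Set X}
    (hr : ∀ x ∈ s, ∀ y ∈ s, r * edist x y ≤ edist (e x) (e y)) :
    (r : ℝ≥0∞) ^ h * μH[h] s ≤ μH[h] (e '' s) := by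
  have hanti : AntilipschitzWith r⁻¹ (s.domRestrict e) := fun x y => by
    rw [ENNReal.coe_inv hr0.ne', mul_comm, ← div_eq_mul_inv,
      ENNReal.le_div_iff_mul_le (by simp [hr0.ne']) (by simp), mul_comm]
    exact hr x x.2 y y.2
  have hle := hanti.le_hausdorffMeasure_image hh univ
  rw [image_univ, range_domRestrict, ← isometry_subtype_coe.hausdorffMeasure_image (.inl hh),
    image_univ, Subtype.range_coe, ENNReal.coe_inv hr0.ne', ENNReal.inv_rpow] at hle
  calc (r : ℝ≥0∞) ^ h * μH[h] s ≤ r ^ h * ((r ^ h : ℝ≥0∞)⁻¹ * μH[h] (e '' s)) := by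
        gcongr
    _ = μH[h] (e '' s) := by
      rw [← mul_assoc, ENNReal.mul_inv_cancel (ENNReal.rpow_pos (by simpa) (by simp)).ne'
        (ENNReal.rpow_ne_top_of_nonneg hh ENNReal.coe_ne_top), one_mul]

variable [SecondCountableTopology X] {D : X → ℝ≥0}

lemma smul_withDensity_hausdorffMeasure_le_comap (hh : 0 ≤ h) (he : MeasurableEmbedding e)
    (hD : Continuous D) (hD0 : ∀ x, 0 < D x)
    (hexp : ∀ x, ∀ r < D x, ∃ u ∈ 𝓝 x, ∀ y ∈ u, ∀ z ∈ u, r * edist y z ≤ edist (e y) (e z))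
    {q : ℝ≥0} (hq0 : 0 < q) (hq1 : q < 1) :
    ((q * q : ℝ≥0) : ℝ≥0∞) ^ h • (μH[h]).withDensity (fun x => (D x : ℝ≥0∞) ^ h)
      ≤ (μH[h]).comap e := by
  refine measure_le_of_locally_le fun x => ?_
  obtain ⟨u, hu, hru⟩ := hexp x (q * D x) (mul_lt_of_lt_one_left (hD0 x) hq1)
  have hDx : ∀ᶠ y in 𝓝 x, q * D y < D x :=
    (hD.const_mul q).continuousAt.eventually_lt_const (mul_lt_of_lt_one_left (hD0 x) hq1)
  refine ⟨u ∩ {y | q * D y < D x}, inter_mem hu hDx, fun s hs hsu => ?_⟩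
  rw [he.comap_apply, Measure.smul_apply, smul_eq_mul, withDensity_apply _ hs]
  calc ((q * q : ℝ≥0) : ℝ≥0∞) ^ h * ∫⁻ y in s, (D y : ℝ≥0∞) ^ h ∂μH[h]
      = ∫⁻ y in s, ((q * q * D y : ℝ≥0) : ℝ≥0∞) ^ h ∂μH[h] := by
        rw [← lintegral_const_mul _ (by fun_prop)]
        simp only [ENNReal.coe_mul _ (D _), ENNReal.mul_rpow_of_nonneg _ _ hh]
    _ ≤ ∫⁻ _ in s, ((q * D x : ℝ≥0) : ℝ≥0∞) ^ h ∂μH[h] := by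
        refine setLIntegral_mono measurable_const fun y hy => ENNReal.rpow_le_rpow ?_ hh
        rw [mul_assoc]
        exact ENNReal.coe_le_coe.2 (mul_le_mul_right (hsu hy).2.le q)
    _ = ((q * D x : ℝ≥0) : ℝ≥0∞) ^ h * μH[h] s := setLIntegral_const _ _
    _ ≤ μH[h] (e '' s) := rpow_mul_hausdorffMeasure_le_image (mul_pos hq0 (hD0 x)) hh
        fun y hy z hz => hru y (hsu hy).1 z (hsu hz).1

lemma withDensity_hausdorffMeasure_le_comap (hh : 0 ≤ h) (he : MeasurableEmbedding e)
    (hD : Continuous D) (hD0 : ∀ x, 0 < D x)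
    (hexp : ∀ x, ∀ r < D x, ∃ u ∈ 𝓝 x, ∀ y ∈ u, ∀ z ∈ u, r * edist y z ≤ edist (e y) (e z)) :
    (μH[h]).withDensity (fun x => (D x : ℝ≥0∞) ^ h) ≤ (μH[h]).comap e := by
  refine Measure.le_iff'.2 fun s => ?_
  have hcont : Continuous fun q : ℝ≥0 => ((q * q : ℝ≥0) : ℝ≥0∞) ^ h :=
    ENNReal.continuous_rpow_const.comp (ENNReal.continuous_coe.comp (by fun_prop))
  have hlim : Tendsto (fun q : ℝ≥0 => ((q * q : ℝ≥0) : ℝ≥0∞) ^ h *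
      (μH[h]).withDensity (fun x => (D x : ℝ≥0∞) ^ h) s) (𝓝[<] 1)
      (𝓝 ((μH[h]).withDensity (fun x => (D x : ℝ≥0∞) ^ h) s)) := by
    simpa using ENNReal.Tendsto.mul_const (hcont.continuousWithinAt (s := Iio 1) (x := 1))
      (.inl (by simp))
  have := nhdsLT_neBot_of_exists_lt (b := (1 : ℝ≥0)) ⟨0, one_pos⟩
  refine le_of_tendsto hlim ?_
  filter_upwards [Ioo_mem_nhdsLT one_pos] with q hq
  exact smul_withDensity_hausdorffMeasure_le_comap hh he hD hD0 hexp hq.1 hq.2 s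

lemma lintegral_comp_mul_rpow_le_setLIntegral_range (hh : 0 ≤ h) (he : MeasurableEmbedding e)
    (hD : Continuous D) (hD0 : ∀ x, 0 < D x)
    (hexp : ∀ x, ∀ r < D x, ∃ u ∈ 𝓝 x, ∀ y ∈ u, ∀ z ∈ u, r * edist y z ≤ edist (e y) (e z))
    {f : Y → ℝ≥0∞} (hf : Measurable fun x => f (e x)) :
    ∫⁻ x, f (e x) * (D x : ℝ≥0∞) ^ h ∂μH[h] ≤ ∫⁻ y in range e, f y ∂μH[h] := by
  calc ∫⁻ x, f (e x) * (D x : ℝ≥0∞) ^ h ∂μH[h]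
      = ∫⁻ x, f (e x) ∂(μH[h]).withDensity (fun x => (D x : ℝ≥0∞) ^ h) := by
        rw [lintegral_withDensity_eq_lintegral_mul _ (by fun_prop) hf]
        simp only [Pi.mul_apply, mul_comm]
    _ ≤ ∫⁻ x, f (e x) ∂(μH[h]).comap e :=
        lintegral_mono' (withDensity_hausdorffMeasure_le_comap hh he hD hD0 hexp) le_rfl
    _ = ∫⁻ y in range e, f y ∂μH[h] := by rw [← he.lintegral_map, he.map_comap]

end Conformality

/-! ### Functions with Lipschitz logarithm -/

/-- `f` is nonnegative on `s` and `log f` is `a`-Lipschitz there, written multiplicatively so that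
`f` is allowed to vanish identically. This is the regularity class preserved by the transfer
operator and the form in which bounded distortion is expressed. -/
structure LogLipschitzOn {X : Type*} [PseudoMetricSpace X] (a : ℝ≥0) (f : X → ℝ) (s : Set X) :
    Prop where
  nonneg : ∀ x ∈ s, 0 ≤ f x
  le_exp_mul : ∀ x ∈ s, ∀ y ∈ s, f x ≤ Real.exp (a * dist x y) * f y

namespace LogLipschitzOn

variable {X Y : Type*} [PseudoMetricSpace X] [PseudoMetricSpace Y] {a c α : ℝ≥0} {f : X → ℝ}
  {s : Set X} {x y : X}

lemma le_exp_mul_of_dist_le (hf : LogLipschitzOn a f s) {d : ℝ} (hx : x ∈ s) (hy : y ∈ s)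
    (hd : dist x y ≤ d) : f x ≤ Real.exp (a * d) * f y :=
  (hf.le_exp_mul x hx y hy).trans <| mul_le_mul_of_nonneg_right
    (Real.exp_le_exp.2 (mul_le_mul_of_nonneg_left hd a.2)) (hf.nonneg y hy)

lemma mono (hf : LogLipschitzOn a f s) (hac : a ≤ c) : LogLipschitzOn c f s where
  nonneg := hf.nonneg
  le_exp_mul x hx y hy := (hf.le_exp_mul x hx y hy).trans <| mul_le_mul_of_nonneg_right
    (Real.exp_le_exp.2 (mul_le_mul_of_nonneg_right hac dist_nonneg)) (hf.nonneg y hy)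

lemma const {r : ℝ} (hr : 0 ≤ r) : LogLipschitzOn a (fun _ => r) s where
  nonneg _ _ := hr
  le_exp_mul _ _ _ _ := le_mul_of_one_le_left hr (Real.one_le_exp (by positivity))

lemma finsetSum {ι : Type*} {F : ι → X → ℝ} (t : Finset ι)
    (hF : ∀ i ∈ t, LogLipschitzOn a (F i) s) : LogLipschitzOn a (fun x => ∑ i ∈ t, F i x) s where
  nonneg x hx := Finset.sum_nonneg fun i hi => (hF i hi).nonneg x hx
  le_exp_mul x hx y hy := by
    rw [Finset.mul_sum]
    exact Finset.sum_le_sum fun i hi => (hF i hi).le_exp_mul x hx y hy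

lemma comp_mul (hf : LogLipschitzOn a f s) {φ : Y → X} {t : Set Y} (hφs : MapsTo φ t s)
    (hφ : LipschitzOnWith α φ t) {D : Y → ℝ} (hD : LogLipschitzOn c D t) :
    LogLipschitzOn (a * α + c) (fun x => f (φ x) * D x) t where
  nonneg x hx := mul_nonneg (hf.nonneg _ (hφs hx)) (hD.nonneg x hx)
  le_exp_mul x hx y hy := by
    calc f (φ x) * D x
        ≤ (Real.exp (a * (α * dist x y)) * f (φ y)) * (Real.exp (c * dist x y) * D y) :=
          mul_le_mul (hf.le_exp_mul_of_dist_le (hφs hx) (hφs hy) (hφ.dist_le_mul x hx y hy))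
            (hD.le_exp_mul x hx y hy) (hD.nonneg x hx)
            (mul_nonneg (Real.exp_pos _).le (hf.nonneg _ (hφs hy)))
      _ = Real.exp ((a * α + c : ℝ≥0) * dist x y) * (f (φ y) * D y) := by
          rw [NNReal.coe_add, NNReal.coe_mul, add_mul, Real.exp_add, mul_assoc (a : ℝ)]
          ring

lemma exists_lipschitzOnWith (hf : LogLipschitzOn a f s) (hs : Bornology.IsBounded s) :
    ∃ K, LipschitzOnWith K f s := by
  rcases s.eq_empty_or_nonempty with rfl | ⟨p, hp⟩
  · exact ⟨0, lipschitzOnWith_empty _ _⟩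
  set E := Real.exp (a * Metric.diam s)
  have hbound (x) (hx : x ∈ s) : f x ≤ E * f p :=
    hf.le_exp_mul_of_dist_le hx hp (Metric.dist_le_diam_of_mem hs hx hp)
  refine ⟨(a * E * (E * f p)).toNNReal, LipschitzOnWith.of_le_add_mul' _ fun x hx y hy => ?_⟩
  have hexp : Real.exp (a * dist x y) - 1 ≤ a * dist x y * E := by
    have hneg := Real.add_one_le_exp (-(a * dist x y))
    have hE : Real.exp (a * dist x y) ≤ E :=
      Real.exp_le_exp.2 (mul_le_mul_of_nonneg_left (Metric.dist_le_diam_of_mem hs hx hy) a.2)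
    have hinv : Real.exp (a * dist x y) * Real.exp (-(a * dist x y)) = 1 := by
      rw [← Real.exp_add, add_neg_cancel, Real.exp_zero]
    nlinarith [Real.exp_pos (a * dist x y), show (0 : ℝ) ≤ a * dist x y by positivity]
  calc f x ≤ f y + (Real.exp (a * dist x y) - 1) * f y := by
        linarith [hf.le_exp_mul x hx y hy]
    _ ≤ f y + a * dist x y * E * (E * f p) := by
        gcongr
        · exact hf.nonneg y hy
        · exact hbound y hy
    _ = f y + a * E * (E * f p) * dist x y := by ring

lemma continuousOn (hf : LogLipschitzOn a f s) (hs : Bornology.IsBounded s) : ContinuousOn f s :=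
  let ⟨_, hK⟩ := hf.exists_lipschitzOnWith hs
  hK.continuousOn

lemma of_lipschitzOnWith {K δ : ℝ≥0} (hδ : 0 < δ) (hf : LipschitzOnWith K f s)
    (hδf : ∀ x ∈ s, δ ≤ f x) : LogLipschitzOn (K / δ) f s where
  nonneg x hx := δ.2.trans (hδf x hx)
  le_exp_mul x hx y hy := by
    have hδ' : (0 : ℝ) < δ := hδ
    calc f x ≤ f y + K * dist x y := hf.le_add_mul hx hy
      _ ≤ f y + K * dist x y * (f y / δ) := by
          have := (one_le_div hδ').2 (hδf y hy)
          exact add_le_add_right (le_mul_of_one_le_right (by positivity) this) _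
      _ = ((K / δ : ℝ≥0) * dist x y + 1) * f y := by push_cast; field_simp; ring
      _ ≤ Real.exp ((K / δ : ℝ≥0) * dist x y) * f y :=
          mul_le_mul_of_nonneg_right (Real.add_one_le_exp _) (hδ'.le.trans (hδf y hy))

end LogLipschitzOn

section RealDerivative

variable {s : Set ℝ} {φ φ' : ℝ → ℝ}

lemma exists_mem_uIcc_dist_image_eq (hs : s.OrdConnected)
    (hφ : ∀ x ∈ s, HasDerivWithinAt φ (φ' x) s x) {x y : ℝ} (hx : x ∈ s) (hy : y ∈ s) :
    ∃ z ∈ uIcc x y, dist (φ x) (φ y) = |φ' z| * dist x y := by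
  wlog hxy : x < y generalizing x y
  · rcases (not_lt.1 hxy).eq_or_lt with rfl | hlt
    · exact ⟨y, by simp⟩
    · obtain ⟨z, hz, hdist⟩ := this hy hx hlt
      exact ⟨z, uIcc_comm y x ▸ hz, by rw [dist_comm, hdist, dist_comm]⟩
  have hsub : Icc x y ⊆ s := hs.out hx hy
  obtain ⟨z, hz, hslope⟩ := exists_hasDerivAt_eq_slope φ φ' hxy
    (fun z hz => ((hφ z (hsub hz)).mono hsub).continuousWithinAt)
    (fun z hz => (hφ z (hsub (Ioo_subset_Icc_self hz))).hasDerivAt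
      (mem_of_superset (Icc_mem_nhds hz.1 hz.2) hsub))
  refine ⟨z, Ioo_subset_Icc_self.trans Icc_subset_uIcc hz, ?_⟩
  rw [hslope, dist_comm, Real.dist_eq, abs_div, dist_comm, Real.dist_eq,
    div_mul_cancel₀ _ (abs_pos.2 (sub_ne_zero.2 hxy.ne')).ne']

lemma dist_image_le_and_dist_le_of_logLipschitzOn_deriv (hs : s.OrdConnected)
    (hφ : ∀ x ∈ s, HasDerivWithinAt φ (φ' x) s x) {a : ℝ≥0}
    (hφ' : LogLipschitzOn a (fun x => |φ' x|) s) {p d : ℝ} (hp : p ∈ s) (hp0 : φ' p ≠ 0)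
    (hd : ∀ x ∈ s, dist x p ≤ d) {x y : ℝ} (hx : x ∈ s) (hy : y ∈ s) :
    dist (φ x) (φ y) ≤ Real.exp (a * d) * |φ' p| * dist x y ∧
      dist x y ≤ Real.exp (a * d) / |φ' p| * dist (φ x) (φ y) := by
  obtain ⟨z, hz, hdist⟩ := exists_mem_uIcc_dist_image_eq hs hφ hx hy
  have hzs : z ∈ s := hs.uIcc_subset hx hy hz
  have hupper : |φ' z| ≤ Real.exp (a * d) * |φ' p| :=
    hφ'.le_exp_mul_of_dist_le hzs hp (hd z hzs)
  have hlower : |φ' p| ≤ Real.exp (a * d) * |φ' z| :=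
    hφ'.le_exp_mul_of_dist_le hp hzs (dist_comm z p ▸ hd z hzs)
  rw [hdist, ← mul_assoc, div_mul_eq_mul_div]
  exact ⟨by gcongr, le_mul_of_one_le_left dist_nonneg ((one_le_div (abs_pos.2 hp0)).2 hlower)⟩

lemma exists_nhds_mul_edist_le (hs : s.OrdConnected)
    (hφ : ∀ x ∈ s, HasDerivWithinAt φ (φ' x) s x) (hφ' : ContinuousOn (fun x => |φ' x|) s)
    {x : ℝ} (hx : x ∈ s) {r : ℝ≥0} (hr : r < |φ' x|) :
    ∃ u ∈ 𝓝 x, ∀ y ∈ u ∩ s, ∀ z ∈ u ∩ s, r * edist y z ≤ edist (φ y) (φ z) := by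
  obtain ⟨ε, hε, hball⟩ := Metric.mem_nhdsWithin_iff.1 ((hφ' x hx).eventually_const_lt hr)
  refine ⟨Metric.ball x ε, Metric.ball_mem_nhds x hε, fun y hy z hz => ?_⟩
  obtain ⟨p, hp, hdist⟩ := exists_mem_uIcc_dist_image_eq hs hφ hy.2 hz.2
  have hord : (Metric.ball x ε ∩ s).OrdConnected := (convex_ball x ε).ordConnected.inter hs
  rw [edist_dist, edist_dist, hdist, ← ENNReal.ofReal_coe_nnreal,
    ← ENNReal.ofReal_mul r.coe_nonneg]
  gcongr
  exact le_of_lt (hball (hord.uIcc_subset hy hz hp))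

lemma setLIntegral_comp_mul_enorm_deriv_le (hs : s.OrdConnected)
    (hφ : ∀ x ∈ s, HasDerivWithinAt φ (φ' x) s x) (hφ' : ContinuousOn (fun x => |φ' x|) s)
    (hne : ∀ x ∈ s, φ' x ≠ 0) (hle : ∀ x ∈ s, |φ' x| ≤ 1) {J : Set ℝ} (hJ : MeasurableSet J)
    (hJs : J ⊆ s) (hinj : InjOn φ J) {h : ℝ} (hh0 : 0 ≤ h) (hh1 : h ≤ 1) {f : ℝ → ℝ≥0∞}
    (hf : ContinuousOn f (φ '' J)) :
    ∫⁻ x in J, f (φ x) * ‖φ' x‖ₑ ∂μH[h] ≤ ∫⁻ y in φ '' J, f y ∂μH[h] := by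
  have hφc : ContinuousOn φ J := fun x hx => ((hφ x (hJs hx)).mono hJs).continuousWithinAt
  have hmap : Measure.map (Subtype.val : J → ℝ) μH[h] = (μH[h]).restrict J := by
    rw [isometry_subtype_coe.map_hausdorffMeasure (.inl hh0), Subtype.range_coe]
  rw [← hmap, (MeasurableEmbedding.subtype_coe hJ).lintegral_map, ← range_domRestrict]
  refine le_trans (lintegral_mono fun x => ?_) (lintegral_comp_mul_rpow_le_setLIntegral_range
    (e := J.domRestrict φ) (D := fun x => ‖φ' x‖₊) hh0 (hφc.measurableEmbedding hJ hinj)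
    ?_ (fun x => nnnorm_pos.2 (hne x (hJs x.2))) (fun x r hr => ?_) ?_)
  · refine mul_le_mul_right (ENNReal.rpow_one ‖φ' x‖ₑ ▸
      ENNReal.rpow_le_rpow_of_exponent_ge ?_ hh1) _
    exact ENNReal.coe_le_one_iff.2 (hle x (hJs x.2))
  · exact Continuous.subtype_mk (continuousOn_iff_continuous_domRestrict.1 (hφ'.mono hJs)) _
  · obtain ⟨u, hu, hexp⟩ := exists_nhds_mul_edist_le hs hφ hφ' (hJs x.2) hr
    exact ⟨Subtype.val ⁻¹' u, continuousAt_subtype_val hu,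
      fun y hy z hz => hexp y ⟨hy, hJs y.2⟩ z ⟨hz, hJs z.2⟩⟩
  · exact (continuousOn_iff_continuous_domRestrict.1
      (hf.comp hφc (mapsTo_image φ J))).measurable

end RealDerivative

/-! ### Limit sets and bounded distortion -/

section LimitSet

/-- The Hutchinson operator of the finite system `{g 1, …, g n}`, whose iterates on `[0, 1]`
are the successive approximations to the limit set. -/
def hutchinson (g : ℕ → ℝ → ℝ) (n : ℕ) (A : Set ℝ) : Set ℝ :=
  ⋃ k ∈ Icc 1 n, g k '' A

variable {g : ℕ → ℝ → ℝ} {n : ℕ}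

lemma hutchinson_mono : Monotone (hutchinson g n) := fun _ _ hAB =>
  biUnion_mono Subset.rfl fun _ _ => image_mono hAB

lemma iUnion_wordComp_image_eq_iterate_hutchinson (A : Set ℝ) (l : ℕ) :
    ⋃ w ∈ {w : List ℕ | w.length = l ∧ ∀ i ∈ w, 1 ≤ i ∧ i ≤ n}, wordComp g w '' A
      = (hutchinson g n)^[l] A := by
  induction l with
  | zero =>
    ext x
    simp [wordComp, List.length_eq_zero_iff, and_assoc]
  | succ l ih =>
    rw [Function.iterate_succ_apply', ← ih]
    ext x
    simp only [hutchinson, mem_iUnion, exists_prop, mem_ofPred_eq, mem_image]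
    constructor
    · rintro ⟨_ | ⟨k, w⟩, ⟨hlen, hw⟩, y, hy, rfl⟩
      · simp at hlen
      · rw [List.forall_mem_cons] at hw
        exact ⟨k, hw.1, _, ⟨w, ⟨by simpa using hlen, hw.2⟩, y, hy, rfl⟩, rfl⟩
    · rintro ⟨k, hk, _, ⟨w, ⟨hlen, hw⟩, y, hy, rfl⟩, rfl⟩
      exact ⟨k :: w, ⟨by simp [hlen], List.forall_mem_cons.2 ⟨hk, hw⟩⟩, y, hy, rfl⟩

lemma limitSet_eq_iInter_iterate_hutchinson :
    limitSet g n = ⋂ l, (hutchinson g n)^[l + 1] (Icc 0 1) :=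
  iInter_congr fun l => iUnion_wordComp_image_eq_iterate_hutchinson _ (l + 1)

lemma limitSet_subset_hutchinson_Icc : limitSet g n ⊆ hutchinson g n (Icc 0 1) := by
  rw [limitSet_eq_iInter_iterate_hutchinson]
  exact iInter_subset _ 0

variable (hmaps : ∀ k ∈ Icc 1 n, MapsTo (g k) (Icc 0 1) (Icc 0 1))
include hmaps

lemma antitone_iterate_hutchinson : Antitone fun l => (hutchinson g n)^[l] (Icc 0 1) :=
  hutchinson_mono.antitone_iterate_of_map_le (iUnion₂_subset fun k hk => (hmaps k hk).image_subset)

lemma iterate_hutchinson_subset_Icc (l : ℕ) : (hutchinson g n)^[l] (Icc 0 1) ⊆ Icc 0 1 :=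
  antitone_iterate_hutchinson hmaps l.zero_le

lemma limitSet_subset_Icc : limitSet g n ⊆ Icc 0 1 :=
  limitSet_subset_hutchinson_Icc.trans (iterate_hutchinson_subset_Icc hmaps 1)

lemma mapsTo_limitSet {k : ℕ} (hk : k ∈ Icc 1 n) : MapsTo (g k) (limitSet g n) (limitSet g n) := by
  rw [limitSet_eq_iInter_iterate_hutchinson]
  refine fun x hx => mem_iInter.2 fun l => antitone_iterate_hutchinson hmaps (l + 1).le_succ ?_
  beta_reduce
  rw [Function.iterate_succ_apply']
  exact mem_iUnion₂.2 ⟨k, hk, mem_image_of_mem _ (mem_iInter.1 hx l)⟩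

lemma limitSet_subset_hutchinson_limitSet (hinj : ∀ k ∈ Icc 1 n, InjOn (g k) (Icc 0 1)) :
    limitSet g n ⊆ hutchinson g n (limitSet g n) := by
  intro x hx
  rw [limitSet_eq_iInter_iterate_hutchinson, mem_iInter] at hx
  obtain ⟨k, hk, hxk⟩ :
      ∃ k ∈ Icc 1 n, ∀ l, x ∈ g k '' (hutchinson g n)^[l] (Icc 0 1) := by
    by_contra! hnot
    choose! L hL using hnot
    have hx' := hx ((Finset.Icc 1 n).sup L)
    rw [Function.iterate_succ_apply'] at hx'
    obtain ⟨k, hk, hxk⟩ := mem_iUnion₂.1 hx'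
    exact hL k hk (image_mono (antitone_iterate_hutchinson hmaps
      (Finset.le_sup (Finset.mem_Icc.2 hk))) hxk)
  refine mem_iUnion₂.2 ⟨k, hk, ?_⟩
  rw [limitSet_eq_iInter_iterate_hutchinson, InjOn.image_iInter_eq]
  · exact mem_iInter.2 fun l => hxk (l + 1)
  · exact (hinj k hk).mono (iUnion_subset fun l => iterate_hutchinson_subset_Icc hmaps _)

variable (hcont : ∀ k ∈ Icc 1 n, ContinuousOn (g k) (Icc 0 1))
include hcont

lemma isCompact_iterate_hutchinson (l : ℕ) : IsCompact ((hutchinson g n)^[l] (Icc 0 1)) := by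
  induction l with
  | zero => exact isCompact_Icc
  | succ l ih =>
    rw [Function.iterate_succ_apply']
    exact (finite_Icc 1 n).isCompact_biUnion fun k hk =>
      ih.image_of_continuousOn ((hcont k hk).mono (iterate_hutchinson_subset_Icc hmaps l))

lemma isCompact_limitSet : IsCompact (limitSet g n) := by
  rw [limitSet_eq_iInter_iterate_hutchinson]
  exact (isCompact_iterate_hutchinson hmaps hcont 1).of_isClosed_subset
    (isClosed_iInter fun l => (isCompact_iterate_hutchinson hmaps hcont (l + 1)).isClosed)
    (iInter_subset _ 0)

lemma limitSet_nonempty (hn : 1 ≤ n) : (limitSet g n).Nonempty := by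
  have hne (l : ℕ) : ((hutchinson g n)^[l] (Icc 0 1)).Nonempty := by
    induction l with
    | zero => exact nonempty_Icc.2 zero_le_one
    | succ l ih =>
      rw [Function.iterate_succ_apply']
      exact nonempty_biUnion.2 ⟨1, ⟨le_rfl, hn⟩, ih.image _⟩
  rw [limitSet_eq_iInter_iterate_hutchinson]
  exact IsCompact.nonempty_iInter_of_sequence_nonempty_isCompact_isClosed _
    (fun l => antitone_iterate_hutchinson hmaps (l + 1).le_succ) (fun l => hne (l + 1))
    (isCompact_iterate_hutchinson hmaps hcont 1)
    fun l => (isCompact_iterate_hutchinson hmaps hcont (l + 1)).isClosed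

end LimitSet

/-- The distortion constant `c / (1 - α)` of all compositions of maps with contraction rate `α` and
distortion `c`: the fixed point of the recursion `a ↦ a * α + c` for a composition. -/
def distortionConst (c α : ℝ≥0) : ℝ≥0 := c / (1 - α)

lemma distortionConst_mul_add {c α : ℝ≥0} (hα : α < 1) :
    distortionConst c α * α + c = distortionConst c α := by
  have hne : 1 - α ≠ 0 := (tsub_pos_of_lt hα).ne'
  rw [distortionConst, div_mul_eq_mul_div, div_add' _ _ _ hne, ← mul_add,
    add_tsub_cancel_of_le hα.le, mul_one]

lemma wordComp_append_singleton (g : ℕ → ℝ → ℝ) (w : List ℕ) (k : ℕ) :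
    wordComp g (w ++ [k]) = wordComp g w ∘ g k := by
  induction w with
  | nil => rfl
  | cons i w ih => rw [List.cons_append, wordComp, ih, wordComp, Function.comp_assoc]

/-- Decreasing maps `g k : [0, 1] → [b k, b (k - 1)]`, `k ≥ 1`, tiling `(0, 1]` as the inverse
branches of the Gauss map do, with derivatives `g' k` that are uniformly contracting with rate
`α < 1` and whose logarithms are uniformly `c`-Lipschitz. Indices start at `k = 1`, so `g 0` is a
junk value. -/
structure IsGaussLikeIFS (b : ℕ → ℝ) (g g' : ℕ → ℝ → ℝ) (c α : ℝ≥0) : Prop where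
  b_zero : b 0 = 1
  b_strictAnti : StrictAnti b
  b_tendsto : Tendsto b atTop (𝓝 0)
  image_Icc : ∀ k, 1 ≤ k → g k '' Icc 0 1 = Icc (b k) (b (k - 1))
  strictAntiOn : ∀ k, 1 ≤ k → StrictAntiOn (g k) (Icc 0 1)
  hasDerivWithinAt : ∀ k, 1 ≤ k → ∀ x ∈ Icc (0 : ℝ) 1, HasDerivWithinAt (g k) (g' k x) (Icc 0 1) x
  deriv_ne_zero : ∀ k, 1 ≤ k → ∀ x ∈ Icc (0 : ℝ) 1, g' k x ≠ 0
  logLipschitzOn_deriv : ∀ k, 1 ≤ k → LogLipschitzOn c (fun x => |g' k x|) (Icc 0 1)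
  abs_deriv_le : ∀ k, 1 ≤ k → ∀ x ∈ Icc (0 : ℝ) 1, |g' k x| ≤ α
  rate_lt_one : α < 1

namespace IsGaussLikeIFS

variable {b : ℕ → ℝ} {g g' : ℕ → ℝ → ℝ} {c α : ℝ≥0} (hg : IsGaussLikeIFS b g g' c α) {k n : ℕ}
include hg

lemma b_pos (k : ℕ) : 0 < b k :=
  (hg.b_strictAnti.antitone.le_of_tendsto hg.b_tendsto (k + 1)).trans_lt
    (hg.b_strictAnti k.lt_succ_self)

lemma b_le_one (k : ℕ) : b k ≤ 1 := hg.b_zero ▸ hg.b_strictAnti.antitone k.zero_le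

lemma apply_mem_Icc (hk : 1 ≤ k) {x : ℝ} (hx : x ∈ Icc 0 1) : g k x ∈ Icc (b k) (b (k - 1)) :=
  hg.image_Icc k hk ▸ mem_image_of_mem _ hx

lemma mapsTo (hk : 1 ≤ k) : MapsTo (g k) (Icc 0 1) (Icc 0 1) := fun _ hx =>
  Icc_subset_Icc (hg.b_pos k).le (hg.b_le_one _) (hg.apply_mem_Icc hk hx)

lemma continuousOn (hk : 1 ≤ k) : ContinuousOn (g k) (Icc 0 1) := fun x hx =>
  (hg.hasDerivWithinAt k hk x hx).continuousWithinAt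

lemma lipschitzOnWith (hk : 1 ≤ k) : LipschitzOnWith α (g k) (Icc 0 1) :=
  (convex_Icc 0 1).lipschitzOnWith_of_nnnorm_hasDerivWithin_le (hg.hasDerivWithinAt k hk)
    (hg.abs_deriv_le k hk)

lemma logLipschitzOn_comp_mul_deriv (hk : 1 ≤ k) {a : ℝ≥0} {f : ℝ → ℝ}
    (hf : LogLipschitzOn a f (Icc 0 1)) :
    LogLipschitzOn (a * α + c) (fun x => f (g k x) * |g' k x|) (Icc 0 1) :=
  hf.comp_mul (hg.mapsTo hk) (hg.lipschitzOnWith hk) (hg.logLipschitzOn_deriv k hk)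

lemma isCompact_limitSet (n : ℕ) : IsCompact (limitSet g n) :=
  _root_.isCompact_limitSet (fun _ hk => hg.mapsTo hk.1) fun _ hk => hg.continuousOn hk.1

lemma limitSet_subset (n : ℕ) : limitSet g n ⊆ Icc (b n) 1 :=
  limitSet_subset_hutchinson_Icc.trans <| iUnion₂_subset fun k hk => hg.image_Icc k hk.1 ▸
    Icc_subset_Icc (hg.b_strictAnti.antitone hk.2) (hg.b_le_one _)

lemma limitSet_subset_unitInterval (n : ℕ) : limitSet g n ⊆ Icc 0 1 :=
  limitSet_subset_Icc fun _ hk => hg.mapsTo hk.1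

lemma disjoint_image_limitSet {k l : ℕ} (hk : 1 ≤ k) (hl : 1 ≤ l) (hkl : k ≠ l) :
    Disjoint (g k '' limitSet g n) (g l '' limitSet g n) := by
  wlog hlt : k < l generalizing k l
  · exact (this hl hk hkl.symm (hkl.lt_or_gt.resolve_left hlt)).symm
  rw [Set.disjoint_left]
  rintro _ ⟨x, hx, rfl⟩ ⟨y, hy, hxy⟩
  have hy0 : 0 < y := (hg.b_pos n).trans_le (hg.limitSet_subset n hy).1
  have hy1 := hg.limitSet_subset_unitInterval n hy
  refine hxy.not_lt ?_
  calc g l y < g l 0 := hg.strictAntiOn l hl (by simp) hy1 hy0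
    _ ≤ b (l - 1) := (hg.apply_mem_Icc hl (by simp)).2
    _ ≤ b k := hg.b_strictAnti.antitone (by omega)
    _ ≤ g k x := (hg.apply_mem_Icc hk (hg.limitSet_subset_unitInterval n hx)).1

/-- The generators acting on the limit set, as self-maps of the subtype. -/
def limitSetMap (n : ℕ) (k : Finset.Icc 1 n) : limitSet g n → limitSet g n :=
  (mapsTo_limitSet (fun _ hk => hg.mapsTo hk.1) (Finset.mem_Icc.1 k.2)).restrict

lemma coe_wordMap_limitSetMap (w : List (Finset.Icc 1 n)) (x : limitSet g n) :
    ((wordMap (hg.limitSetMap n) w x : limitSet g n) : ℝ) = wordComp g (w.map (↑)) x := by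
  induction w with
  | nil => rfl
  | cons k w ih => exact congrArg (g k) ih

lemma range_limitSetMap (k : Finset.Icc 1 n) :
    range (hg.limitSetMap n k) = (↑) ⁻¹' (g k '' limitSet g n) := by
  ext x
  simp [limitSetMap, Subtype.ext_iff]

lemma exists_hasDerivWithinAt_wordComp (w : List ℕ) (hw : ∀ i ∈ w, 1 ≤ i) :
    ∃ φ' : ℝ → ℝ, (∀ x ∈ Icc (0 : ℝ) 1, HasDerivWithinAt (wordComp g w) (φ' x) (Icc 0 1) x) ∧
      (∀ x ∈ Icc (0 : ℝ) 1, φ' x ≠ 0) ∧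
      LogLipschitzOn (distortionConst c α) (fun x => |φ' x|) (Icc 0 1) ∧
      ∀ x ∈ Icc (0 : ℝ) 1, |φ' x| ≤ (α : ℝ) ^ w.length := by
  induction w using List.reverseRecOn with
  | nil =>
    exact ⟨fun _ => 1, fun x _ => hasDerivWithinAt_id x _, by simp, by
      simpa using LogLipschitzOn.const zero_le_one, by simp⟩
  | append_singleton w k ih =>
    obtain ⟨φ', hφ, hne, hll, hle⟩ := ih fun i hi => hw i (by simp [hi])
    have hk : 1 ≤ k := hw k (by simp)
    have hmaps := hg.mapsTo hk
    refine ⟨fun x => φ' (g k x) * g' k x, fun x hx => ?_, fun x hx => ?_, ?_, fun x hx => ?_⟩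
    · rw [wordComp_append_singleton]
      exact (hφ _ (hmaps hx)).comp x (hg.hasDerivWithinAt k hk x hx) hmaps
    · exact mul_ne_zero (hne _ (hmaps hx)) (hg.deriv_ne_zero k hk x hx)
    · simpa only [abs_mul, distortionConst_mul_add hg.rate_lt_one] using
        hg.logLipschitzOn_comp_mul_deriv hk hll
    · rw [abs_mul, List.length_append, List.length_singleton, pow_succ]
      exact mul_le_mul (hle _ (hmaps hx)) (hg.abs_deriv_le k hk x hx) (abs_nonneg _) (by positivity)

lemma exists_ratio_wordComp (w : List ℕ) (hw : ∀ i ∈ w, 1 ≤ i) :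
    ∃ r : ℝ≥0, 0 < r ∧ r ≤ α ^ w.length ∧ ∀ x ∈ Icc (0 : ℝ) 1, ∀ y ∈ Icc (0 : ℝ) 1,
      dist (wordComp g w x) (wordComp g w y) ≤ Real.exp (distortionConst c α) * r * dist x y ∧
      dist x y ≤ Real.exp (distortionConst c α) / r *
        dist (wordComp g w x) (wordComp g w y) := by
  obtain ⟨φ', hφ, hne, hll, hle⟩ := hg.exists_hasDerivWithinAt_wordComp w hw
  have h0 : (0 : ℝ) ∈ Icc (0 : ℝ) 1 := by simp
  refine ⟨‖φ' 0‖₊, nnnorm_pos.2 (hne 0 h0), by exact_mod_cast hle 0 h0, fun x hx y hy => ?_⟩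
  simpa using dist_image_le_and_dist_le_of_logLipschitzOn_deriv ordConnected_Icc hφ hll h0
    (hne 0 h0) (fun z hz => Real.dist_le_of_mem_Icc_01 hz h0) hx hy

lemma exists_isQuasiSelfSimilar (n : ℕ) :
    ∃ ρ K, IsQuasiSelfSimilar (hg.limitSetMap n) ρ K α := by
  have hw (w : List (Finset.Icc 1 n)) : ∀ i ∈ w.map (↑), 1 ≤ i :=
    List.forall_mem_map.2 fun i _ => (Finset.mem_Icc.1 i.2).1
  choose ρ hρ0 hρα hdist using fun w => hg.exists_ratio_wordComp _ (hw w)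
  have hJ (x : limitSet g n) := hg.limitSet_subset_unitInterval n x.2
  refine ⟨ρ, (Real.exp (distortionConst c α)).toNNReal, ?_, fun k l hkl => ?_,
    Real.toNNReal_pos.2 (Real.exp_pos _), hg.rate_lt_one, hρ0, fun w => ?_,
    fun w => LipschitzWith.of_dist_le_mul fun x y => ?_,
    fun w => AntilipschitzWith.of_le_mul_dist fun x y => ?_⟩
  · refine iUnion_eq_univ_iff.2 fun x => ?_
    obtain ⟨k, hk, hx⟩ := mem_iUnion₂.1 (limitSet_subset_hutchinson_limitSet
      (fun _ hk => hg.mapsTo hk.1) (fun k hk => (hg.strictAntiOn k hk.1).injOn) x.2)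
    exact ⟨⟨k, Finset.mem_Icc.2 hk⟩, by rwa [range_limitSetMap]⟩
  · rw [Function.onFun, range_limitSetMap, range_limitSetMap]
    exact (hg.disjoint_image_limitSet (Finset.mem_Icc.1 k.2).1 (Finset.mem_Icc.1 l.2).1
      (Subtype.coe_ne_coe.2 hkl)).preimage _
  · simpa using hρα w
  · rw [Subtype.dist_eq, hg.coe_wordMap_limitSetMap, hg.coe_wordMap_limitSetMap, NNReal.coe_mul,
      Real.coe_toNNReal _ (Real.exp_pos _).le]
    exact (hdist w x (hJ x) y (hJ y)).1
  · rw [Subtype.dist_eq (wordMap _ w x), hg.coe_wordMap_limitSetMap, hg.coe_wordMap_limitSetMap,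
      NNReal.coe_div, Real.coe_toNNReal _ (Real.exp_pos _).le]
    exact (hdist w x (hJ x) y (hJ y)).2

lemma hausdorffMeasure_limitSet (hn : 2 ≤ n) {h : ℝ}
    (hdim : dimH (limitSet g n) = ENNReal.ofReal h) :
    0 < h ∧ μH[h] (limitSet g n) ≠ 0 ∧ μH[h] (limitSet g n) ≠ ∞ := by
  have : CompactSpace (limitSet g n) := isCompact_iff_compactSpace.1 (hg.isCompact_limitSet n)
  have : Nonempty (limitSet g n) := (limitSet_nonempty (fun _ hk => hg.mapsTo hk.1)
    (fun _ hk => hg.continuousOn hk.1) (one_le_two.trans hn)).to_subtype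
  have : Nontrivial (Finset.Icc 1 n) :=
    ⟨⟨1, Finset.mem_Icc.2 ⟨le_rfl, one_le_two.trans hn⟩⟩,
      ⟨2, Finset.mem_Icc.2 ⟨one_le_two, hn⟩⟩, by simp⟩
  obtain ⟨ρ, K, hρ⟩ := hg.exists_isQuasiSelfSimilar n
  have hdim' : dimH (univ : Set (limitSet g n)) = h.toNNReal := by
    rw [← isometry_subtype_coe.dimH_image, image_univ, Subtype.range_coe, hdim, ENNReal.ofReal]
  have hh : 0 < h.toNNReal := by exact_mod_cast hdim' ▸ hρ.dimH_univ_pos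
  have hcoe : (h.toNNReal : ℝ) = h := Real.coe_toNNReal _ (Real.toNNReal_pos.1 hh).le
  have hmeas : μH[h] (limitSet g n) = μH[h.toNNReal] (univ : Set (limitSet g n)) := by
    rw [← isometry_subtype_coe.hausdorffMeasure_image (.inl (NNReal.coe_nonneg _)), image_univ,
      Subtype.range_coe, hcoe]
  rw [hmeas]
  exact ⟨Real.toNNReal_pos.1 hh, hρ.hausdorffMeasure_univ_ne_zero hh hdim'.ge,
    hρ.hausdorffMeasure_univ_ne_top hdim'.le⟩

end IsGaussLikeIFS

/-! ### Transfer operators -/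

/-- The transfer operator of the first `N` branches with respect to Lebesgue measure. -/
def transfer (g g' : ℕ → ℝ → ℝ) (N : ℕ) (f : ℝ → ℝ) (x : ℝ) : ℝ :=
  ∑ k ∈ Finset.Icc 1 N, f (g k x) * |g' k x|

namespace IsGaussLikeIFS

variable {b : ℕ → ℝ} {g g' : ℕ → ℝ → ℝ} {c α : ℝ≥0} (hg : IsGaussLikeIFS b g g' c α)
  {k n N : ℕ} {f : ℝ → ℝ}
include hg

lemma logLipschitzOn_transfer {a : ℝ≥0} (hf : LogLipschitzOn a f (Icc 0 1)) :
    LogLipschitzOn (a * α + c) (transfer g g' N f) (Icc 0 1) :=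
  .finsetSum _ fun _ hk => hg.logLipschitzOn_comp_mul_deriv (Finset.mem_Icc.1 hk).1 hf

lemma continuousOn_abs_deriv (hk : 1 ≤ k) : ContinuousOn (fun x => |g' k x|) (Icc 0 1) :=
  (hg.logLipschitzOn_deriv k hk).continuousOn (Metric.isBounded_Icc 0 1)

lemma continuousOn_comp_mul_deriv (hk : 1 ≤ k) (hf : ContinuousOn f (Icc 0 1)) :
    ContinuousOn (fun x => f (g k x) * |g' k x|) (Icc 0 1) :=
  (hf.comp (hg.continuousOn hk) (hg.mapsTo hk)).mul (hg.continuousOn_abs_deriv hk)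

lemma continuousOn_transfer (hf : ContinuousOn f (Icc 0 1)) :
    ContinuousOn (transfer g g' N f) (Icc 0 1) :=
  continuousOn_finsetSum _ fun _ hk => hg.continuousOn_comp_mul_deriv (Finset.mem_Icc.1 hk).1 hf

lemma comp_mul_deriv_nonneg (hk : 1 ≤ k) (hf0 : ∀ x ∈ Icc (0 : ℝ) 1, 0 ≤ f x) {x : ℝ}
    (hx : x ∈ Icc 0 1) : 0 ≤ f (g k x) * |g' k x| :=
  mul_nonneg (hf0 _ (hg.mapsTo hk hx)) (abs_nonneg _)

lemma transfer_nonneg (hf0 : ∀ x ∈ Icc (0 : ℝ) 1, 0 ≤ f x) {x : ℝ} (hx : x ∈ Icc 0 1) :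
    0 ≤ transfer g g' N f x :=
  Finset.sum_nonneg fun _ hk => hg.comp_mul_deriv_nonneg (Finset.mem_Icc.1 hk).1 hf0 hx

lemma setIntegral_comp_mul_deriv (f : ℝ → ℝ) (N : ℕ) :
    ∫ x in Icc (0 : ℝ) 1, f (g (N + 1) x) * |g' (N + 1) x| = ∫ x in b (N + 1)..b N, f x := by
  have hN : 1 ≤ N + 1 := N.succ_pos
  have hcv := integral_image_eq_integral_abs_deriv_smul measurableSet_Icc
    (hg.hasDerivWithinAt _ hN) (hg.strictAntiOn _ hN).injOn f
  rw [hg.image_Icc _ hN, Nat.add_sub_cancel] at hcv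
  rw [intervalIntegral.integral_of_le (hg.b_strictAnti.antitone N.le_succ),
    ← integral_Icc_eq_integral_Ioc, hcv]
  simp only [smul_eq_mul, mul_comm]

lemma setIntegral_transfer (hf : ContinuousOn f (Icc 0 1)) (N : ℕ) :
    ∫ x in Icc (0 : ℝ) 1, transfer g g' N f x = ∫ x in b N..1, f x := by
  have hint (i j : ℕ) : IntervalIntegrable f volume (b i) (b j) :=
    (hf.mono <| ordConnected_Icc.uIcc_subset ⟨(hg.b_pos i).le, hg.b_le_one i⟩
      ⟨(hg.b_pos j).le, hg.b_le_one j⟩).intervalIntegrable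
  induction N with
  | zero => simp [transfer, hg.b_zero]
  | succ N ih =>
    have hsplit (x : ℝ) : transfer g g' (N + 1) f x =
        transfer g g' N f x + f (g (N + 1) x) * |g' (N + 1) x| :=
      Finset.sum_Icc_succ_top (by omega) _
    simp only [hsplit]
    rw [integral_add (hg.continuousOn_transfer hf).integrableOn_Icc
      (hg.continuousOn_comp_mul_deriv N.succ_pos hf).integrableOn_Icc, ih,
      hg.setIntegral_comp_mul_deriv, add_comm, ← hg.b_zero,
      intervalIntegral.integral_add_adjacent_intervals (hint _ _) (hint _ _)]

lemma tendsto_setIntegral_transfer (hf : ContinuousOn f (Icc 0 1)) :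
    Tendsto (fun N => ∫ x in Icc (0 : ℝ) 1, transfer g g' N f x) atTop
      (𝓝 (∫ x in Icc (0 : ℝ) 1, f x)) := by
  simp only [hg.setIntegral_transfer hf]
  rw [integral_Icc_eq_integral_Ioc, ← intervalIntegral.integral_of_le zero_le_one]
  have hcont : ContinuousOn (fun u => ∫ x in u..1, f x) (Icc 0 1) := by
    have := intervalIntegral.continuousOn_primitive_interval_left (μ := volume)
      (a := (0 : ℝ)) (b := 1) (f := f) (by simpa using hf.integrableOn_Icc)
    simpa using this
  exact (hcont 0 (by simp)).tendsto.comp <| tendsto_nhdsWithin_iff.2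
    ⟨hg.b_tendsto, .of_forall fun N => ⟨(hg.b_pos N).le, hg.b_le_one N⟩⟩

lemma setLIntegral_comp_mul_deriv_le {J : Set ℝ} (hJ : MeasurableSet J) (hJI : J ⊆ Icc 0 1)
    (hk : 1 ≤ k) (hf : ContinuousOn f (Icc 0 1)) (hf0 : ∀ x ∈ Icc (0 : ℝ) 1, 0 ≤ f x) {h : ℝ}
    (hh0 : 0 ≤ h) (hh1 : h ≤ 1) :
    ∫⁻ x in J, ENNReal.ofReal (f (g k x) * |g' k x|) ∂μH[h] ≤
      ∫⁻ x in g k '' J, ENNReal.ofReal (f x) ∂μH[h] := by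
  have hmul (x) (hx : x ∈ J) : ENNReal.ofReal (f (g k x) * |g' k x|) =
      ENNReal.ofReal (f (g k x)) * ‖g' k x‖ₑ := by
    rw [Real.enorm_eq_ofReal_abs, ENNReal.ofReal_mul (hf0 _ (hg.mapsTo hk (hJI hx)))]
  rw [setLIntegral_congr_fun hJ hmul]
  exact setLIntegral_comp_mul_enorm_deriv_le ordConnected_Icc (hg.hasDerivWithinAt k hk)
    (hg.continuousOn_abs_deriv hk) (hg.deriv_ne_zero k hk)
    (fun x hx => (hg.abs_deriv_le k hk x hx).trans hg.rate_lt_one.le) hJ hJI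
    ((hg.strictAntiOn k hk).injOn.mono hJI) hh0 hh1
    (ENNReal.continuous_ofReal.comp_continuousOn
      (hf.mono ((image_mono hJI).trans (hg.mapsTo hk).image_subset)))

lemma setLIntegral_transfer_le (hNn : N ≤ n) (hf : ContinuousOn f (Icc 0 1))
    (hf0 : ∀ x ∈ Icc (0 : ℝ) 1, 0 ≤ f x) {h : ℝ} (hh0 : 0 ≤ h) (hh1 : h ≤ 1) :
    ∫⁻ x in limitSet g n, ENNReal.ofReal (transfer g g' N f x) ∂μH[h] ≤
      ∫⁻ x in limitSet g n, ENNReal.ofReal (f x) ∂μH[h] := by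
  set J := limitSet g n
  have hJ : MeasurableSet J := (hg.isCompact_limitSet n).measurableSet
  have hJI : J ⊆ Icc 0 1 := hg.limitSet_subset_unitInterval n
  have hpos {k} (hk : k ∈ Finset.Icc 1 N) : 1 ≤ k := (Finset.mem_Icc.1 hk).1
  calc ∫⁻ x in J, ENNReal.ofReal (transfer g g' N f x) ∂μH[h]
      = ∫⁻ x in J, ∑ k ∈ Finset.Icc 1 N, ENNReal.ofReal (f (g k x) * |g' k x|) ∂μH[h] :=
        setLIntegral_congr_fun hJ fun x hx => ENNReal.ofReal_sum_of_nonneg fun k hk =>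
          hg.comp_mul_deriv_nonneg (hpos hk) hf0 (hJI hx)
    _ = ∑ k ∈ Finset.Icc 1 N, ∫⁻ x in J, ENNReal.ofReal (f (g k x) * |g' k x|) ∂μH[h] :=
        lintegral_finsetSum' _ fun k hk =>
          (((hg.continuousOn_comp_mul_deriv (hpos hk) hf).mono hJI).aemeasurable hJ).ennreal_ofReal
    _ ≤ ∑ k ∈ Finset.Icc 1 N, ∫⁻ x in g k '' J, ENNReal.ofReal (f x) ∂μH[h] :=
        Finset.sum_le_sum fun k hk =>
          hg.setLIntegral_comp_mul_deriv_le hJ hJI (hpos hk) hf hf0 hh0 hh1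
    _ = ∫⁻ x in ⋃ k ∈ Finset.Icc 1 N, g k '' J, ENNReal.ofReal (f x) ∂μH[h] :=
        (lintegral_biUnion_finset
          (fun k hk l hl hkl => hg.disjoint_image_limitSet (hpos hk) (hpos hl) hkl)
          (fun k hk => ((hg.isCompact_limitSet n).image_of_continuousOn
            ((hg.continuousOn (hpos hk)).mono hJI)).measurableSet) _).symm
    _ ≤ ∫⁻ x in J, ENNReal.ofReal (f x) ∂μH[h] :=
        lintegral_mono_set <| iUnion₂_subset fun k hk =>
          (mapsTo_limitSet (fun _ hl => hg.mapsTo hl.1)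
            ⟨hpos hk, (Finset.mem_Icc.1 hk).2.trans hNn⟩).image_subset

end IsGaussLikeIFS

/-- The measures `m i` are, along `l`, probability measures on `[0, 1]` under which every truncated
transfer operator decreases the integral of nonnegative continuous functions. -/
structure IsAsymptoticallySubinvariant {ι : Type*} (g g' : ℕ → ℝ → ℝ) (m : ι → Measure ℝ)
    (l : Filter ι) : Prop where
  isProbabilityMeasure : ∀ᶠ i in l, IsProbabilityMeasure (m i)
  ae_mem : ∀ᶠ i in l, ∀ᵐ x ∂m i, x ∈ Icc (0 : ℝ) 1
  integral_transfer_le : ∀ N, ∀ᶠ i in l, ∀ f : ℝ → ℝ, ContinuousOn f (Icc 0 1) →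
    (∀ x ∈ Icc (0 : ℝ) 1, 0 ≤ f x) → ∫ x, transfer g g' N f x ∂m i ≤ ∫ x, f x ∂m i

lemma integrable_of_continuousOn_of_ae_mem {X : Type*} [TopologicalSpace X] [T2Space X]
    [MeasurableSpace X] [OpensMeasurableSpace X] {μ : Measure X} [IsFiniteMeasureOnCompacts μ]
    {K : Set X} (hK : IsCompact K) (hμ : ∀ᵐ x ∂μ, x ∈ K) {f : X → ℝ} (hf : ContinuousOn f K) :
    Integrable f μ := by
  simpa only [IntegrableOn, Measure.restrict_eq_self_of_ae_mem hμ] using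
    hf.integrableOn_compact (μ := μ) hK

lemma dimH_le_one (s : Set ℝ) : dimH s ≤ 1 := (dimH_mono (subset_univ s)).trans Real.dimH_univ.le

namespace IsGaussLikeIFS

variable {b : ℕ → ℝ} {g g' : ℕ → ℝ → ℝ} {c α : ℝ≥0} (hg : IsGaussLikeIFS b g g' c α)
include hg

lemma isAsymptoticallySubinvariant_cond_hausdorffMeasure {h : ℕ → ℝ}
    (hdim : ∀ᶠ n in atTop, dimH (limitSet g n) = ENNReal.ofReal (h n)) :
    IsAsymptoticallySubinvariant g g' (fun n => ProbabilityTheory.cond μH[h n] (limitSet g n))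
      atTop := by
  have hprob : ∀ᶠ n in atTop,
      IsProbabilityMeasure (ProbabilityTheory.cond μH[h n] (limitSet g n)) := by
    filter_upwards [hdim, eventually_ge_atTop 2] with n hn hn2
    obtain ⟨-, hne_zero, hne_top⟩ := hg.hausdorffMeasure_limitSet hn2 hn
    exact ProbabilityTheory.cond_isProbabilityMeasure_of_finite hne_zero hne_top
  have hmem (n : ℕ) : ∀ᵐ x ∂ProbabilityTheory.cond μH[h n] (limitSet g n), x ∈ Icc (0 : ℝ) 1 :=
    (ProbabilityTheory.ae_cond_mem (hg.isCompact_limitSet n).measurableSet).mono fun _ hx =>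
      hg.limitSet_subset_unitInterval n hx
  refine ⟨hprob, .of_forall hmem, fun N => ?_⟩
  filter_upwards [hdim, hprob, eventually_ge_atTop 2, eventually_ge_atTop N] with
    n hn _ hn2 hNn f hf hf0
  have hh0 : 0 ≤ h n := (hg.hausdorffMeasure_limitSet hn2 hn).1.le
  have hh1 : h n ≤ 1 := ENNReal.ofReal_le_one.1 (hn ▸ dimH_le_one _)
  have hint {u : ℝ → ℝ} := integrable_of_continuousOn_of_ae_mem isCompact_Icc (hmem n) (f := u)
  rw [integral_eq_lintegral_of_nonneg_ae ((hmem n).mono hf0) (hint hf).1,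
    integral_eq_lintegral_of_nonneg_ae ((hmem n).mono fun x hx => hg.transfer_nonneg hf0 hx)
      (hint (hg.continuousOn_transfer hf)).1]
  refine ENNReal.toReal_mono (hint hf).lintegral_lt_top.ne ?_
  simp only [ProbabilityTheory.cond, lintegral_smul_measure]
  exact mul_le_mul_right (hg.setLIntegral_transfer_le hNn hf hf0 hh0 hh1) _

end IsGaussLikeIFS

/-! ### Asymptotic domination of Lebesgue measure -/

lemma isProbabilityMeasure_volume_restrict_unitInterval :
    IsProbabilityMeasure (volume.restrict (Icc (0 : ℝ) 1)) := ⟨by simp⟩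

lemma integral_add_const_of_isProbabilityMeasure {X : Type*} [MeasurableSpace X] {μ : Measure X}
    [IsProbabilityMeasure μ] {f : X → ℝ} (hf : Integrable f μ) (r : ℝ) :
    ∫ x, f x + r ∂μ = ∫ x, f x ∂μ + r := by
  rw [integral_add hf (integrable_const r), integral_const, probReal_univ, one_smul]

lemma LogLipschitzOn.exp_neg_mul_setIntegral_le {a : ℝ≥0} {f : ℝ → ℝ}
    (hf : LogLipschitzOn a f (Icc 0 1)) {x : ℝ} (hx : x ∈ Icc 0 1) :
    Real.exp (-a) * ∫ y in Icc (0 : ℝ) 1, f y ≤ f x := by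
  have hle : ∫ y in Icc (0 : ℝ) 1, f y ≤ ∫ _ in Icc (0 : ℝ) 1, Real.exp a * f x :=
    setIntegral_mono_on (hf.continuousOn (Metric.isBounded_Icc 0 1)).integrableOn_Icc
      continuousOn_const.integrableOn_Icc measurableSet_Icc fun y hy => by
        simpa using hf.le_exp_mul_of_dist_le hy hx (Real.dist_le_of_mem_Icc_01 hy hx)
  rw [Real.exp_neg, inv_mul_le_iff₀ (Real.exp_pos _)]
  simpa using hle

/-- Along `l`, the integrals of `a`-log-Lipschitz functions against `m i` are asymptotically at
least `t` times their Lebesgue integrals over `[0, 1]`. -/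
def EventuallyDominates {ι : Type*} (m : ι → Measure ℝ) (l : Filter ι) (t : ℝ) (a : ℝ≥0) : Prop :=
  ∀ f, LogLipschitzOn a f (Icc 0 1) → ∀ ε > 0, ∀ᶠ i in l,
    t * (∫ x in Icc (0 : ℝ) 1, f x) - ε ≤ ∫ x, f x ∂m i

lemma EventuallyDominates.mono {ι : Type*} {m : ι → Measure ℝ} {l : Filter ι} {t : ℝ}
    {a a' : ℝ≥0} (hm : EventuallyDominates m l t a') (haa' : a ≤ a') :
    EventuallyDominates m l t a :=
  fun f hf => hm f (hf.mono haa')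

section EventuallyDominates

variable {ι : Type*} {m : ι → Measure ℝ} {l : Filter ι} {t : ℝ} {a : ℝ≥0} {f : ℝ → ℝ}

lemma eventuallyDominates_zero (hmem : ∀ᶠ i in l, ∀ᵐ x ∂m i, x ∈ Icc (0 : ℝ) 1) (a : ℝ≥0) :
    EventuallyDominates m l 0 a := by
  intro f hf ε hε
  filter_upwards [hmem] with i hi
  have : 0 ≤ ∫ x, f x ∂m i := integral_nonneg_of_ae (hi.mono hf.nonneg)
  linarith

lemma EventuallyDominates.of_lipschitzOnWith (hm : ∀ a, EventuallyDominates m l t a)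
    (hprob : ∀ᶠ i in l, IsProbabilityMeasure (m i))
    (hmem : ∀ᶠ i in l, ∀ᵐ x ∂m i, x ∈ Icc (0 : ℝ) 1) {K δ : ℝ≥0} {r : ℝ} (hδ : 0 < δ)
    (hf : LipschitzOnWith K f (Icc 0 1)) (hδf : ∀ x ∈ Icc (0 : ℝ) 1, δ ≤ f x + r) {ε : ℝ}
    (hε : 0 < ε) :
    ∀ᶠ i in l, t * ((∫ x in Icc (0 : ℝ) 1, f x) + r) - ε ≤ (∫ x, f x ∂m i) + r := by
  have hshift : LipschitzOnWith K (fun x => f x + r) (Icc 0 1) := by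
    simpa using hf.add (LipschitzWith.const r).lipschitzOnWith
  filter_upwards [hm _ _ (.of_lipschitzOnWith hδ hshift hδf) ε hε, hprob, hmem] with i hi _ hmi
  have := isProbabilityMeasure_volume_restrict_unitInterval
  rwa [integral_add_const_of_isProbabilityMeasure hf.continuousOn.integrableOn_Icc,
    integral_add_const_of_isProbabilityMeasure
      (integrable_of_continuousOn_of_ae_mem isCompact_Icc hmi hf.continuousOn)] at hi

-- Probability measures integrate the constant `exp (-a) * ∫ f ≤ f` exactly, so the factor `t` is
-- only lost on the remainder of `f`.
lemma EventuallyDominates.improve (hm : ∀ a, EventuallyDominates m l t a)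
    (hprob : ∀ᶠ i in l, IsProbabilityMeasure (m i))
    (hmem : ∀ᶠ i in l, ∀ᵐ x ∂m i, x ∈ Icc (0 : ℝ) 1) (ht : 0 ≤ t) (a : ℝ≥0) :
    EventuallyDominates m l (t + (1 - t) * Real.exp (-a)) a := by
  intro f hf ε hε
  obtain ⟨K, hK⟩ := hf.exists_lipschitzOnWith (Metric.isBounded_Icc 0 1)
  set L := ∫ x in Icc (0 : ℝ) 1, f x
  have hlower (x) (hx : x ∈ Icc (0 : ℝ) 1) :
      (ε / 2).toNNReal ≤ f x + (ε / 2 - Real.exp (-a) * L) := by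
    rw [Real.coe_toNNReal _ (half_pos hε).le]
    linarith [hf.exp_neg_mul_setIntegral_le hx]
  filter_upwards [of_lipschitzOnWith hm hprob hmem (Real.toNNReal_pos.2 (half_pos hε)) hK hlower
    (half_pos hε)] with i hi
  linarith [mul_nonneg ht (half_pos hε).le]

end EventuallyDominates

namespace IsGaussLikeIFS

variable {b : ℕ → ℝ} {g g' : ℕ → ℝ → ℝ} {c α : ℝ≥0} (hg : IsGaussLikeIFS b g g' c α) {ι : Type*}
  {m : ι → Measure ℝ} {l : Filter ι} (hm : IsAsymptoticallySubinvariant g g' m l) {t : ℝ}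
include hg hm

lemma eventuallyDominates_of_mul_add {a : ℝ≥0} (hdom : EventuallyDominates m l t (a * α + c)) :
    EventuallyDominates m l t a := by
  intro f hf ε hε
  have hfc := hf.continuousOn (Metric.isBounded_Icc 0 1)
  obtain ⟨N, hN⟩ := (((hg.tendsto_setIntegral_transfer hfc).const_mul t).eventually_const_lt
    (sub_lt_self _ (half_pos hε))).exists
  filter_upwards [hdom _ (hg.logLipschitzOn_transfer (N := N) hf) (ε / 2) (half_pos hε),
    hm.integral_transfer_le N] with i hdom_i hsub
  linarith [hsub f hfc hf.nonneg]

lemma eventuallyDominates_of_distortionConst_add_one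
    (hdom : EventuallyDominates m l t (distortionConst c α + 1)) (a : ℝ≥0) :
    EventuallyDominates m l t a := by
  have hiter (j : ℕ) : ∀ a : ℝ≥0, α ^ j * a ≤ 1 →
      EventuallyDominates m l t (distortionConst c α + a) := by
    induction j with
    | zero => exact fun a ha => hdom.mono (by gcongr; simpa using ha)
    | succ j ih =>
      intro a ha
      refine hg.eventuallyDominates_of_mul_add hm ?_
      have hstep : (distortionConst c α + a) * α + c = distortionConst c α + α * a := by
        rw [add_mul, add_right_comm, distortionConst_mul_add hg.rate_lt_one, mul_comm a]
      exact hstep ▸ ih _ (by rwa [← mul_assoc, ← pow_succ])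
  have hlim : Tendsto (fun j : ℕ => α ^ j * a) atTop (𝓝 0) := by
    simpa using (tendsto_pow_atTop_nhds_zero_of_lt_one zero_le hg.rate_lt_one).mul_const a
  obtain ⟨j, hj⟩ := (hlim.eventually_lt_const zero_lt_one).exists
  exact (hiter j a hj.le).mono le_add_self

lemma eventuallyDominates_one_sub_pow (i : ℕ) (a : ℝ≥0) :
    EventuallyDominates m l (1 - (1 - Real.exp (-(distortionConst c α + 1 : ℝ≥0))) ^ i) a := by
  set θ := Real.exp (-(distortionConst c α + 1 : ℝ≥0))
  have hθ : 0 ≤ 1 - θ := sub_nonneg.2 (Real.exp_le_one_iff.2 (neg_nonpos.2 (NNReal.coe_nonneg _)))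
  have hθ' : 1 - θ ≤ 1 := sub_le_self _ (Real.exp_pos _).le
  induction i generalizing a with
  | zero => simpa using eventuallyDominates_zero hm.ae_mem a
  | succ i ih =>
    refine hg.eventuallyDominates_of_distortionConst_add_one hm ?_ a
    convert EventuallyDominates.improve ih hm.isProbabilityMeasure hm.ae_mem
      (sub_nonneg.2 (pow_le_one₀ hθ hθ')) (distortionConst c α + 1) using 1
    ring

lemma eventuallyDominates_one (a : ℝ≥0) : EventuallyDominates m l 1 a := by
  intro f hf ε hε
  set θ := Real.exp (-(distortionConst c α + 1 : ℝ≥0))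
  have hθ : 0 ≤ 1 - θ := sub_nonneg.2 (Real.exp_le_one_iff.2 (neg_nonpos.2 (NNReal.coe_nonneg _)))
  have hlim : Tendsto (fun i : ℕ => (1 - θ) ^ i * ∫ x in Icc (0 : ℝ) 1, f x) atTop (𝓝 0) := by
    simpa using (tendsto_pow_atTop_nhds_zero_of_lt_one hθ
      (sub_lt_self _ (Real.exp_pos _))).mul_const (∫ x in Icc (0 : ℝ) 1, f x)
  obtain ⟨i, hi⟩ := (hlim.eventually_lt_const (half_pos hε)).exists
  filter_upwards [hg.eventuallyDominates_one_sub_pow hm i a f hf (ε / 2) (half_pos hε)] with n hn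
  linarith

end IsGaussLikeIFS

section WeakConvergence

variable {ι : Type*} {m : ι → Measure ℝ} {l : Filter ι} (hdom : ∀ a, EventuallyDominates m l 1 a)
  (hprob : ∀ᶠ i in l, IsProbabilityMeasure (m i))
  (hmem : ∀ᶠ i in l, ∀ᵐ x ∂m i, x ∈ Icc (0 : ℝ) 1) {f : ℝ → ℝ} {ε : ℝ}
include hdom hprob hmem

lemma eventually_setIntegral_sub_le_of_lipschitzOnWith {K : ℝ≥0}
    (hf : LipschitzOnWith K f (Icc 0 1)) (hε : 0 < ε) :
    ∀ᶠ i in l, (∫ x in Icc (0 : ℝ) 1, f x) - ε ≤ ∫ x, f x ∂m i := by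
  obtain ⟨C, hC⟩ := isCompact_Icc.exists_bound_of_continuousOn hf.continuousOn
  have hlower (x) (hx : x ∈ Icc (0 : ℝ) 1) : ((1 : ℝ≥0) : ℝ) ≤ f x + (C + 1) := by
    rw [NNReal.coe_one]
    linarith [(abs_le.1 (hC x hx)).1]
  filter_upwards [EventuallyDominates.of_lipschitzOnWith hdom hprob hmem one_pos hf hlower hε]
    with i hi
  linarith

lemma eventually_setIntegral_sub_le_of_continuousOn (hf : ContinuousOn f (Icc 0 1)) (hε : 0 < ε) :
    ∀ᶠ i in l, (∫ x in Icc (0 : ℝ) 1, f x) - ε ≤ ∫ x, f x ∂m i := by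
  obtain ⟨p, hp⟩ := exists_polynomial_near_of_continuousOn 0 1 f hf (ε / 3) (by positivity)
  have hpc : ContinuousOn (fun x => p.eval x) (Icc (0 : ℝ) 1) := p.continuousOn
  obtain ⟨K, hK⟩ : ∃ K, LipschitzOnWith K (fun x => p.eval x) (Icc 0 1) :=
    (p.contDiff_aeval 1).locallyLipschitz.locallyLipschitzOn.exists_lipschitzOnWith_of_compact
      isCompact_Icc
  have hf_le : ∫ x in Icc (0 : ℝ) 1, f x ≤ ∫ x in Icc (0 : ℝ) 1, (p.eval x + ε / 3) :=
    setIntegral_mono_on hf.integrableOn_Icc (hpc.add continuousOn_const).integrableOn_Icc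
      measurableSet_Icc fun x hx => by linarith [(abs_lt.1 (hp x hx)).1]
  have := isProbabilityMeasure_volume_restrict_unitInterval
  rw [integral_add_const_of_isProbabilityMeasure hpc.integrableOn_Icc] at hf_le
  filter_upwards [eventually_setIntegral_sub_le_of_lipschitzOnWith hdom hprob hmem hK
    (show 0 < ε / 3 by positivity), hprob, hmem] with i hi _ hmi
  have hint {u : ℝ → ℝ} := integrable_of_continuousOn_of_ae_mem isCompact_Icc hmi (f := u)
  have hp_le : ∫ x, p.eval x ∂m i ≤ ∫ x, (f x + ε / 3) ∂m i :=
    integral_mono_ae (hint hpc) (hint (hf.add continuousOn_const)) <| hmi.mono fun x hx => by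
      linarith [(abs_lt.1 (hp x hx)).2]
  rw [integral_add_const_of_isProbabilityMeasure (hint hf)] at hp_le
  linarith

lemma tendsto_integral_of_eventuallyDominates (hf : ContinuousOn f (Icc 0 1)) :
    Tendsto (fun i => ∫ x, f x ∂m i) l (𝓝 (∫ x in Icc (0 : ℝ) 1, f x)) := by
  rw [Metric.tendsto_nhds]
  intro ε hε
  filter_upwards [eventually_setIntegral_sub_le_of_continuousOn hdom hprob hmem hf (half_pos hε),
    eventually_setIntegral_sub_le_of_continuousOn hdom hprob hmem hf.neg (half_pos hε)]
    with i hlower hupper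
  simp only [Pi.neg_apply, integral_neg] at hupper
  rw [Real.dist_eq, abs_lt]
  constructor <;> linarith

end WeakConvergence

lemma logLipschitzOn_abs_of_abs_deriv_div_le {s : Set ℝ} (hs : Convex ℝ s) {u u' : ℝ → ℝ} {c : ℝ≥0}
    (hu : ∀ x ∈ s, HasDerivWithinAt u (u' x) s x) (hne : ∀ x ∈ s, u x ≠ 0)
    (hc : ∀ x ∈ s, |u' x / u x| ≤ c) : LogLipschitzOn c (fun x => |u x|) s where
  nonneg _ _ := abs_nonneg _
  le_exp_mul x hx y hy := by
    have hlog : |Real.log (u x) - Real.log (u y)| ≤ c * dist x y :=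
      hs.norm_image_sub_le_of_norm_hasDerivWithin_le (f := fun x => Real.log (u x))
        (fun x hx => (hu x hx).log (hne x hx)) hc hy hx
    rw [← Real.log_abs (u x), ← Real.log_abs (u y)] at hlog
    calc |u x| = Real.exp (Real.log |u x|) := (Real.exp_log (abs_pos.2 (hne x hx))).symm
      _ ≤ Real.exp (c * dist x y + Real.log |u y|) :=
          Real.exp_le_exp.2 (by linarith [(abs_le.1 hlog).2])
      _ = Real.exp (c * dist x y) * |u y| := by
          rw [Real.exp_add, Real.exp_log (abs_pos.2 (hne y hy))]

lemma NonlinearIFS.exists_isGaussLikeIFS (S : NonlinearIFS) :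
    ∃ c α : ℝ≥0, IsGaussLikeIFS S.b S.g S.g' c α := by
  obtain ⟨c, hc, hdist⟩ := S.N3
  obtain ⟨α, hα, hrate⟩ := S.N5
  have hα0 : 0 ≤ α := (abs_nonneg _).trans (hrate 1 le_rfl 0 (by simp)).le
  lift c to ℝ≥0 using hc.le
  lift α to ℝ≥0 using hα0
  exact ⟨c, α,
    { b_zero := S.b_zero
      b_strictAnti := S.b_anti
      b_tendsto := S.b_lim
      image_Icc := S.g_image
      strictAntiOn := S.g_anti
      hasDerivWithinAt := fun k hk x hx => (S.deriv1 k hk x hx).hasDerivWithinAt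
      deriv_ne_zero := S.deriv_ne
      logLipschitzOn_deriv := fun k hk => logLipschitzOn_abs_of_abs_deriv_div_le (convex_Icc 0 1)
        (fun x hx => (S.deriv2 k hk x hx).hasDerivWithinAt) (S.deriv_ne k hk)
        fun x hx => (hdist k hk x hx).le
      abs_deriv_le := fun k hk x hx => (hrate k hk x hx).le
      rate_lt_one := hα }⟩

theorem nonlinear_weak_star_convergence_general {b : ℕ → ℝ} {g g' : ℕ → ℝ → ℝ} {c α : ℝ≥0}
    (hg : IsGaussLikeIFS b g g' c α) {h : ℕ → ℝ}
    (hdim : ∀ᶠ n in atTop, dimH (limitSet g n) = ENNReal.ofReal (h n)) {f : ℝ → ℝ}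
    (hf : ContinuousOn f (Icc 0 1)) :
    Tendsto (fun n => ∫ x, f x ∂ProbabilityTheory.cond μH[h n] (limitSet g n)) atTop
      (𝓝 (∫ x in Icc (0 : ℝ) 1, f x)) := by
  have hm := hg.isAsymptoticallySubinvariant_cond_hausdorffMeasure hdim
  exact tendsto_integral_of_eventuallyDominates (hg.eventuallyDominates_one hm)
    hm.isProbabilityMeasure hm.ae_mem hf

/-- In the nonlinear setting, the normalized Hausdorff measures `m_n` converge weak-* to
    Lebesgue measure on `[0,1]`: the integral of any bounded continuous function against `m_n`
    converges to its Lebesgue integral over `[0,1]`. -/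
theorem nonlinear_weak_star_convergence (S : NonlinearIFS)
    (f : ℝ → ℝ) (hf : Continuous f) (hfb : ∃ C : ℝ, ∀ x : ℝ, |f x| ≤ C) :
    Filter.Tendsto (fun n : ℕ => ∫ x, f x ∂(normMeasure S n)) Filter.atTop
      (nhds (∫ x in Set.Icc (0 : ℝ) 1, f x)) := by
  obtain ⟨c, α, hS⟩ := S.exists_isGaussLikeIFS
  exact nonlinear_weak_star_convergence_general hS ((eventually_ge_atTop 1).mono S.h_dim)
    hf.continuousOn
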